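/- The range T(LlogL(-1,1)) of the finite Hilbert transform on LlogL is a proper dense linear subspace of L^1(-1,1): it is dense in L^1(-1,1), and there exists a function g ∈ L^1(-1,1) that does not belong to T(LlogL(-1,1)). -/

import Mathlib

open MeasureTheory Set Filter

noncomputable section

/-- Lebesgue measure restricted to the interval `(-1, 1)`. -/
def μI : Measure ℝ := volume.restrict (Set.Ioo (-1 : ℝ) 1)

/-- The finite Hilbert transform: the principal-value limit
`T(f)(t) = lim_{ε→0⁺} (1/π) ∫_{x∈(-1,1), |x-t|≥ε} f(x)/(x-t) dx`. -/
def FHT (f : ℝ → ℂ) (t : ℝ) : ℂ :=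
  limUnder (nhdsWithin (0 : ℝ) (Set.Ioi 0)) fun ε : ℝ =>
    (Real.pi : ℂ)⁻¹ *
      ∫ x in {x : ℝ | x ∈ Set.Ioo (-1 : ℝ) 1 ∧ ε ≤ |x - t|}, f x / ((x : ℂ) - (t : ℂ))

/-- The operator `T̂(g)(x) = -(1-x²)^{-1/2} T(t ↦ √(1-t²) g(t))(x)`. -/
def hatT (g : ℝ → ℂ) (x : ℝ) : ℂ :=
  -((Real.sqrt (1 - x ^ 2) : ℂ))⁻¹ * FHT (fun t => (Real.sqrt (1 - t ^ 2) : ℂ) * g t) x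

/-- Membership in the Zygmund space `L log L(-1,1)`:
`f` is a.e. measurable on `(-1,1)` and `∫ |f| log⁺|f| < ∞`. -/
def MemLlogL (f : ℝ → ℂ) : Prop :=
  AEStronglyMeasurable f μI ∧
    IntegrableOn (fun x => ‖f x‖ * max (Real.log ‖f x‖) 0) (Set.Ioo (-1 : ℝ) 1)

/-- The distribution function `λ ↦ |{x ∈ (-1,1) : |f(x)| > λ}|`. -/
def distFun (f : ℝ → ℂ) (lam : ℝ) : ℝ :=
  (volume {x : ℝ | x ∈ Set.Ioo (-1 : ℝ) 1 ∧ lam < ‖f x‖}).toReal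

/-- The decreasing rearrangement `f*` of `f`, a function on `(0,2)`. -/
def decRearr (f : ℝ → ℂ) (t : ℝ) : ℝ :=
  sInf {lam : ℝ | 0 ≤ lam ∧ distFun f lam ≤ t}

/-- The `L log L` norm `‖f‖ = ∫_0^2 f*(t) log(2e/t) dt`. -/
def llogLNorm (f : ℝ → ℂ) : ℝ :=
  ∫ t in Set.Ioo (0 : ℝ) 2, decRearr f t * Real.log (2 * Real.exp 1 / t)

/-- The `L(log L)^α` norm `∫_0^2 f*(t) log^α(2e/t) dt` (for `α = 0` this is the `L¹` norm). -/
def zygNorm (α : ℝ) (f : ℝ → ℂ) : ℝ :=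
  ∫ t in Set.Ioo (0 : ℝ) 2, decRearr f t * Real.log (2 * Real.exp 1 / t) ^ α

/-- Membership in the Zygmund space `L(log L)^α(-1,1)`. -/
def MemZyg (α : ℝ) (f : ℝ → ℂ) : Prop :=
  AEStronglyMeasurable f μI ∧
    IntegrableOn (fun t => decRearr f t * Real.log (2 * Real.exp 1 / t) ^ α)
      (Set.Ioo (0 : ℝ) 2)

/-- Membership in `L(log L)²(-1,1)`: `∫ |f| (log(2+|f|))² < ∞`. -/
def MemLlogL2 (f : ℝ → ℂ) : Prop :=
  AEStronglyMeasurable f μI ∧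
    IntegrableOn (fun x => ‖f x‖ * Real.log (2 + ‖f x‖) ^ 2) (Set.Ioo (-1 : ℝ) 1)

/-- The constant `c(β,γ) = max{1/(1-β), 1/(1-γ), 1/(β+γ-1)}`. -/
def cBG (β γ : ℝ) : ℝ := max (max (1 / (1 - β)) (1 / (1 - γ))) (1 / (β + γ - 1))

abbrev SS (t ε : ℝ) : Set ℝ := {x : ℝ | x ∈ Set.Ioo (-1 : ℝ) 1 ∧ ε ≤ |x - t|}

lemma measurableSet_SS (t ε : ℝ) : MeasurableSet (SS t ε) := by
  have h1 : MeasurableSet {x : ℝ | ε ≤ |x - t|} :=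
    measurableSet_le measurable_const (by fun_prop)
  exact measurableSet_Ioo.inter h1

def wf (x : ℝ) : ℝ := (Real.sqrt (1 - x ^ 2))⁻¹

lemma measurable_wf : Measurable wf := by unfold wf; fun_prop

lemma wf_nonneg (x : ℝ) : 0 ≤ wf x := by unfold wf; positivity

lemma integrableOn_wf : IntegrableOn wf (Ioo (-1) 1) := by
  have := intervalIntegral.integrableOn_deriv_of_nonneg (g := Real.arcsin) (g' := wf)
    (a := -1) (b := 1) Real.continuous_arcsin.continuousOn
    (fun x hx => by
      have := Real.hasDerivAt_arcsin (x := x) hx.1.ne' hx.2.ne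
      simpa [wf] using this) (fun x _ => wf_nonneg x)
  exact this.mono_set Ioo_subset_Ioc_self

lemma integral_wf_pos : 0 < ∫ x in Ioo (-1 : ℝ) 1, wf x := by
  rw [setIntegral_pos_iff_support_of_nonneg_ae (Eventually.of_forall wf_nonneg) integrableOn_wf]
  have : Ioo (-1 : ℝ) 1 ⊆ Function.support wf ∩ Ioo (-1) 1 := by
    intro x hx
    refine ⟨?_, hx⟩
    have : 0 < 1 - x ^ 2 := by nlinarith [hx.1, hx.2]
    simp only [Function.mem_support, wf]
    positivity
  refine lt_of_lt_of_le ?_ (measure_mono this)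
  simp

/-- integrability on the truncated set -/
lemma integrableOn_div {f : ℝ → ℂ} (hf : IntegrableOn f (Ioo (-1) 1)) (t : ℝ) {ε : ℝ} (hε : 0 < ε) :
    IntegrableOn (fun x => f x / ((x : ℂ) - (t : ℂ))) (SS t ε) := by
  have h1 : IntegrableOn f (SS t ε) := hf.mono_set (fun x hx => hx.1)
  have : IntegrableOn (fun x : ℝ => ((x : ℂ) - (t : ℂ))⁻¹ * f x) (SS t ε) := by
    refine Integrable.bdd_mul (c := ε⁻¹) h1 ?_ ?_
    · exact (by fun_prop : Measurable fun x : ℝ => ((x : ℂ) - (t : ℂ))⁻¹).aestronglyMeasurable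
    · refine (ae_restrict_iff' (measurableSet_SS t ε)).2 (Eventually.of_forall fun x hx => ?_)
      rw [norm_inv, ← Complex.ofReal_sub, Complex.norm_real, Real.norm_eq_abs]
      exact inv_anti₀ hε hx.2
  refine this.congr (Eventually.of_forall fun x => ?_)
  exact (div_eq_inv_mul _ _).symm

def HasPV (f : ℝ → ℂ) (t : ℝ) (L : ℂ) : Prop :=
  Tendsto (fun ε : ℝ => ∫ x in SS t ε, f x / ((x : ℂ) - (t : ℂ))) (nhdsWithin 0 (Ioi 0)) (nhds L)

lemma HasPV.add {f g : ℝ → ℂ} {t : ℝ} {L M : ℂ} (hf : IntegrableOn f (Ioo (-1) 1))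
    (hg : IntegrableOn g (Ioo (-1) 1)) (h1 : HasPV f t L) (h2 : HasPV g t M) :
    HasPV (fun x => f x + g x) t (L + M) := by
  refine (Tendsto.add h1 h2).congr' ?_
  filter_upwards [self_mem_nhdsWithin] with ε hε
  rw [← integral_add (integrableOn_div hf t hε) (integrableOn_div hg t hε)]
  simp only [add_div]

lemma HasPV.const_mul {f : ℝ → ℂ} {t : ℝ} {L : ℂ} (c : ℂ) (h1 : HasPV f t L) :
    HasPV (fun x => c * f x) t (c * L) := by
  refine (Tendsto.const_mul c h1).congr' ?_
  filter_upwards [self_mem_nhdsWithin] with ε hε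
  rw [← integral_const_mul]
  simp only [mul_div_assoc]

lemma tendsto_integral_SS {f : ℝ → ℂ} {t : ℝ} (hf : IntegrableOn f (Ioo (-1) 1)) :
    Tendsto (fun ε : ℝ => ∫ x in SS t ε, f x) (nhdsWithin 0 (Ioi 0))
      (nhds (∫ x in Ioo (-1 : ℝ) 1, f x)) := by
  have key : Tendsto (fun ε : ℝ => ∫ x, (SS t ε).indicator f x) (nhdsWithin 0 (Ioi 0))
      (nhds (∫ x, (Ioo (-1 : ℝ) 1).indicator f x)) := by
    have hi : Integrable ((Ioo (-1 : ℝ) 1).indicator f) :=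
      (integrable_indicator_iff measurableSet_Ioo).2 hf
    refine tendsto_integral_filter_of_dominated_convergence
      (fun x => ‖(Ioo (-1 : ℝ) 1).indicator f x‖) ?_ ?_ hi.norm ?_
    · refine Eventually.of_forall fun ε => ?_
      have : IntegrableOn f (SS t ε) := hf.mono_set (fun x hx => hx.1)
      exact ((integrable_indicator_iff (measurableSet_SS t ε)).2 this).aestronglyMeasurable
    · refine Eventually.of_forall fun ε => Eventually.of_forall fun x => ?_
      exact norm_indicator_le_of_subset (fun x hx => hx.1) _ _
    · have : ∀ᵐ x : ℝ, x ≠ t := by simp [ae_iff]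
      filter_upwards [this] with x hx
      refine tendsto_const_nhds.congr' ?_
      have h0 : 0 < |x - t| := abs_pos.2 (sub_ne_zero.2 hx)
      filter_upwards [mem_nhdsWithin_of_mem_nhds (Iio_mem_nhds h0)] with ε hε
      by_cases hxI : x ∈ Ioo (-1 : ℝ) 1
      · have : x ∈ SS t ε := ⟨hxI, le_of_lt hε⟩
        rw [indicator_of_mem hxI, indicator_of_mem this]
      · have : x ∉ SS t ε := fun h => hxI h.1
        rw [indicator_of_notMem hxI, indicator_of_notMem this]
  rw [integral_indicator measurableSet_Ioo] at key
  refine key.congr fun ε => ?_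
  rw [integral_indicator (measurableSet_SS t ε)]

lemma HasPV.mul_id {f : ℝ → ℂ} {t : ℝ} {L : ℂ} (hf : IntegrableOn f (Ioo (-1) 1))
    (h1 : HasPV f t L) :
    HasPV (fun x : ℝ => (x : ℂ) * f x) t (t * L + ∫ x in Ioo (-1 : ℝ) 1, f x) := by
  refine ((Tendsto.const_mul (t : ℂ) h1).add (tendsto_integral_SS (t := t) hf)).congr' ?_
  filter_upwards [self_mem_nhdsWithin] with ε hε
  have hε' : 0 < ε := hε
  rw [← integral_const_mul, ← integral_add ((integrableOn_div hf t hε).const_mul _)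
    (hf.mono_set (fun x hx => hx.1))]
  refine setIntegral_congr_fun (measurableSet_SS t ε) fun x hx => ?_
  have : (x : ℂ) - t ≠ 0 := by
    rw [← Complex.ofReal_sub]
    have h2 := hx.2
    intro h
    have : x - t = 0 := by exact_mod_cast h
    rw [this] at h2
    simp at h2
    linarith
  field_simp
  ring

lemma IntegrableOn.mul_id' {f : ℝ → ℂ} (hf : IntegrableOn f (Ioo (-1) 1)) :
    IntegrableOn (fun x : ℝ => (x : ℂ) * f x) (Ioo (-1) 1) := by
  refine Integrable.bdd_mul (c := 1) hf ?_ ?_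
  · exact (by fun_prop : Measurable fun x : ℝ => (x : ℂ)).aestronglyMeasurable
  · refine (ae_restrict_iff' measurableSet_Ioo).2 (Eventually.of_forall fun x hx => ?_)
    rw [Complex.norm_real, Real.norm_eq_abs, abs_le]
    exact ⟨hx.1.le, hx.2.le⟩

def DD (t x : ℝ) : ℝ := 1 - x * t + Real.sqrt (1 - x ^ 2) * Real.sqrt (1 - t ^ 2)

lemma DD_pos {t x : ℝ} (ht : t ∈ Ioo (-1 : ℝ) 1) (hx : x ∈ Icc (-1 : ℝ) 1) : 0 < DD t x := by
  unfold DD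
  have h1 : 0 < 1 - x * t := by
    have : |x * t| < 1 := by
      rw [abs_mul]
      have h1 : |x| ≤ 1 := abs_le.2 hx
      have h2 : |t| < 1 := abs_lt.2 ht
      nlinarith [abs_nonneg x, abs_nonneg t]
    linarith [(abs_lt.1 this).2]
  positivity

def PhiW (t x : ℝ) : ℝ := (Real.sqrt (1 - t ^ 2))⁻¹ * (Real.log (x - t) - Real.log (DD t x))

lemma continuous_DD (t : ℝ) : Continuous (DD t) := by unfold DD; fun_prop

lemma PhiW_cont {t : ℝ} (ht : t ∈ Ioo (-1 : ℝ) 1) {s : Set ℝ} (hs : s ⊆ Icc (-1 : ℝ) 1)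
    (hst : ∀ x ∈ s, x ≠ t) : ContinuousOn (PhiW t) s := by
  unfold PhiW
  refine continuousOn_const.mul (ContinuousOn.sub ?_ ?_)
  · exact ContinuousOn.log (by fun_prop) (fun x hx => sub_ne_zero.2 (hst x hx))
  · exact ContinuousOn.log (continuous_DD t).continuousOn (fun x hx => (DD_pos ht (hs hx)).ne')

lemma PhiW_deriv {t x : ℝ} (ht : t ∈ Ioo (-1 : ℝ) 1) (hx : x ∈ Ioo (-1 : ℝ) 1) (hxt : x ≠ t) :
    HasDerivAt (PhiW t) (wf x / (x - t)) x := by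
  have hD := DD_pos ht (Ioo_subset_Icc_self hx)
  have hx0 : 0 < 1 - x ^ 2 := by nlinarith [hx.1, hx.2]
  have ht0 : 0 < 1 - t ^ 2 := by nlinarith [ht.1, ht.2]
  have hr : 0 < Real.sqrt (1 - x ^ 2) := Real.sqrt_pos.2 hx0
  have hs : 0 < Real.sqrt (1 - t ^ 2) := Real.sqrt_pos.2 ht0
  have hr2 := Real.sq_sqrt hx0.le
  have hs2 := Real.sq_sqrt ht0.le
  have hne := sub_ne_zero.2 hxt
  have h1 : HasDerivAt (fun x : ℝ => Real.log (x - t)) (1 / (x - t)) x :=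
    ((hasDerivAt_id x).sub_const t).log hne
  have h2 : HasDerivAt (fun x : ℝ => 1 - x ^ 2) (-(2 * x)) x := by
    simpa using ((hasDerivAt_id x).pow 2).const_sub 1
  have h3 := (h2.sqrt hx0.ne').mul_const (Real.sqrt (1 - t ^ 2))
  have h4 : HasDerivAt (fun x : ℝ => 1 - x * t) (-t) x := by
    simpa using ((hasDerivAt_id x).mul_const t).const_sub 1
  have h5 : HasDerivAt (DD t) _ x := h4.add h3
  have h6 := (h1.sub (h5.log hD.ne')).const_mul (Real.sqrt (1 - t ^ 2))⁻¹
  refine h6.congr_deriv ?_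
  unfold wf
  have hDD : DD t x = 1 - x * t + Real.sqrt (1 - x ^ 2) * Real.sqrt (1 - t ^ 2) := rfl
  generalize DD t x = D at *
  generalize Real.sqrt (1 - x ^ 2) = r at *
  generalize Real.sqrt (1 - t ^ 2) = s at *
  have hx2 : x ^ 2 = 1 - r ^ 2 := by linarith
  have ht2 : t ^ 2 = 1 - s ^ 2 := by linarith
  field_simp
  subst hDD
  ring_nf
  ring_nf at hx2 ht2
  simp only [hx2, ht2]
  ring

lemma PhiW_end {t x : ℝ} (hx : x = 1 ∨ x = -1) : PhiW t x = 0 := by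
  rcases hx with rfl | rfl
  · simp [PhiW, DD]
  · have : -1 - t = -(1 + t) := by ring
    simp [PhiW, DD, this, -neg_add_rev]

lemma SS_eq {t ε : ℝ} (hε : 0 < ε) (h1 : -1 < t - ε) (h2 : t + ε < 1) :
    SS t ε = Ioc (-1) (t - ε) ∪ Ico (t + ε) 1 := by
  ext x
  simp only [mem_ofPred_eq, mem_Ioo, mem_union, mem_Ioc, mem_Ico, le_abs]
  constructor
  · rintro ⟨⟨a, b⟩, c | c⟩
    · right; constructor <;> linarith
    · left; constructor <;> linarith
  · rintro (⟨a, b⟩ | ⟨a, b⟩)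
    · exact ⟨⟨a, by linarith⟩, Or.inr (by linarith)⟩
    · exact ⟨⟨by linarith, b⟩, Or.inl (by linarith)⟩

lemma pv_w_real {t : ℝ} (ht : t ∈ Ioo (-1 : ℝ) 1) :
    Tendsto (fun ε : ℝ => ∫ x in SS t ε, wf x / (x - t)) (nhdsWithin 0 (Ioi 0)) (nhds 0) := by
  have hlim : Tendsto (fun ε : ℝ => (Real.sqrt (1 - t ^ 2))⁻¹ *
      (Real.log (DD t (t + ε)) - Real.log (DD t (t - ε)))) (nhds 0) (nhds 0) := by
    have hc : ContinuousAt (fun ε : ℝ => (Real.sqrt (1 - t ^ 2))⁻¹ *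
      (Real.log (DD t (t + ε)) - Real.log (DD t (t - ε)))) 0 := by
      have hD := (DD_pos ht (Ioo_subset_Icc_self ht)).ne'
      have := continuous_DD t
      refine continuousAt_const.mul (ContinuousAt.sub ?_ ?_)
      · exact ContinuousAt.log (by fun_prop) (by simpa using hD)
      · exact ContinuousAt.log (by fun_prop) (by simpa using hD)
    simpa [ContinuousAt] using hc
  refine (hlim.mono_left nhdsWithin_le_nhds).congr' ?_
  filter_upwards [self_mem_nhdsWithin,
    mem_nhdsWithin_of_mem_nhds (Iio_mem_nhds (show (0:ℝ) < t + 1 by linarith [ht.1])),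
    mem_nhdsWithin_of_mem_nhds (Iio_mem_nhds (show (0:ℝ) < 1 - t by linarith [ht.2]))]
    with ε hε h1 h2
  have hε' : 0 < ε := hε
  have h1' : -1 < t - ε := by have : ε < t + 1 := h1; linarith
  have h2' : t + ε < 1 := by have : ε < 1 - t := h2; linarith
  have hint : IntegrableOn (fun x => wf x / (x - t)) (SS t ε) := by
    have hc : IntegrableOn (fun x => (wf x : ℂ)) (Ioo (-1) 1) := integrableOn_wf.ofReal
    have := (integrableOn_div hc t hε').re
    refine this.congr (Eventually.of_forall fun x => ?_)
    simp only []
    rw [← Complex.ofReal_sub, ← Complex.ofReal_div]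
    exact Complex.ofReal_re _
  rw [SS_eq hε' h1' h2'] at hint ⊢
  have hi1 := hint.mono_set subset_union_left
  have hi2 := hint.mono_set subset_union_right
  rw [setIntegral_union (by
      rw [Set.disjoint_left]; intro x hx hx'; linarith [hx.2, hx'.1]) measurableSet_Ico hi1 hi2,
    integral_Ico_eq_integral_Ioo, ← integral_Ioc_eq_integral_Ioo,
    ← intervalIntegral.integral_of_le h1'.le, ← intervalIntegral.integral_of_le h2'.le,
    intervalIntegral.integral_eq_sub_of_hasDerivAt_of_le h1'.le
      (PhiW_cont ht (fun x hx => ⟨hx.1, by linarith [hx.2]⟩)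
        (fun x hx h => by linarith [hx.2]))
      (fun x hx => PhiW_deriv ht ⟨hx.1, by linarith [hx.2]⟩ (fun h => by linarith [hx.2]))
      ((intervalIntegrable_iff_integrableOn_Ioc_of_le h1'.le).2 hi1),
    intervalIntegral.integral_eq_sub_of_hasDerivAt_of_le h2'.le
      (PhiW_cont ht (fun x hx => ⟨by linarith [hx.1], hx.2⟩)
        (fun x hx h => by linarith [hx.1]))
      (fun x hx => PhiW_deriv ht ⟨by linarith [hx.1], hx.2⟩ (fun h => by linarith [hx.1]))
      ((intervalIntegrable_iff_integrableOn_Ico_of_le h2'.le).2 hi2),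
    PhiW_end (Or.inl rfl), PhiW_end (Or.inr rfl)]
  unfold PhiW
  simp
  ring

lemma hasPV_w {t : ℝ} (ht : t ∈ Ioo (-1 : ℝ) 1) : HasPV (fun x => (wf x : ℂ)) t 0 := by
  have := (Complex.continuous_ofReal.tendsto 0).comp (pv_w_real ht)
  unfold HasPV
  simp only [Complex.ofReal_zero] at this
  refine this.congr fun ε => ?_
  simp only [Function.comp]
  rw [← integral_complex_ofReal]
  simp

lemma poly_bdd (q : Polynomial ℂ) : ∃ C : ℝ, 0 ≤ C ∧ ∀ x ∈ Icc (-1 : ℝ) 1, ‖q.eval (x : ℂ)‖ ≤ C := by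
  have hc : ContinuousOn (fun x : ℝ => q.eval (x : ℂ)) (Icc (-1) 1) := by fun_prop
  obtain ⟨C, hC⟩ := isCompact_Icc.exists_bound_of_continuousOn hc
  exact ⟨C, le_trans (norm_nonneg _) (hC 0 (by simp)), hC⟩

lemma poly_meas (q : Polynomial ℂ) : Measurable (fun x : ℝ => q.eval (x : ℂ)) :=
  Continuous.measurable (by fun_prop)

lemma integrableOn_poly_w (q : Polynomial ℂ) :
    IntegrableOn (fun x : ℝ => q.eval (x : ℂ) * wf x) (Ioo (-1) 1) := by
  obtain ⟨C, _, hC⟩ := poly_bdd q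
  have hw : IntegrableOn (fun x => (wf x : ℂ)) (Ioo (-1) 1) := integrableOn_wf.ofReal
  refine Integrable.bdd_mul (c := C) hw (poly_meas q).aestronglyMeasurable ?_
  exact (ae_restrict_iff' measurableSet_Ioo).2
    (Eventually.of_forall fun x hx => hC x (Ioo_subset_Icc_self hx))

open Polynomial in
lemma exists_q_monomial (n : ℕ) : ∃ q : ℂ[X], ∀ t ∈ Ioo (-1 : ℝ) 1,
    HasPV (fun x => q.eval (x : ℂ) * wf x) t ((t : ℂ) ^ n) := by
  set c : ℂ := ∫ x in Ioo (-1 : ℝ) 1, (wf x : ℂ) with hc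
  have hc0 : c ≠ 0 := by
    rw [hc, integral_complex_ofReal]
    exact_mod_cast integral_wf_pos.ne'
  have hw : IntegrableOn (fun x => (wf x : ℂ)) (Ioo (-1) 1) := integrableOn_wf.ofReal
  have base : ∀ t ∈ Ioo (-1 : ℝ) 1,
      HasPV (fun x => (C c⁻¹ * X : ℂ[X]).eval (x : ℂ) * wf x) t 1 := by
    intro t ht
    have h1 := (HasPV.mul_id hw (hasPV_w ht)).const_mul c⁻¹
    rw [mul_zero, zero_add, ← hc, inv_mul_cancel₀ hc0] at h1
    convert h1 using 1
    funext x
    simp only [eval_mul, eval_X, eval_C]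
    ring
  induction n with
  | zero =>
    refine ⟨(C c⁻¹ * X : ℂ[X]), fun t ht => ?_⟩
    rw [pow_zero]
    exact base t ht
  | succ n ih =>
    obtain ⟨q, hq⟩ := ih
    refine ⟨X * q + C (-∫ x in Ioo (-1 : ℝ) 1, q.eval (x : ℂ) * wf x) * (C c⁻¹ * X), fun t ht => ?_⟩
    have hqi := integrableOn_poly_w q
    have h1 := HasPV.mul_id hqi (hq t ht)
    have h2 := (base t ht).const_mul (-∫ x in Ioo (-1 : ℝ) 1, q.eval (x : ℂ) * wf x)
    have h3 := HasPV.add (IntegrableOn.mul_id' hqi)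
      (Integrable.const_mul (integrableOn_poly_w _) _) h1 h2
    convert h3 using 1
    · funext x
      simp only [eval_add, eval_mul, eval_X, eval_C]
      ring
    · ring

open Polynomial in
lemma exists_q (p : ℂ[X]) : ∃ q : ℂ[X], ∀ t ∈ Ioo (-1 : ℝ) 1,
    HasPV (fun x => q.eval (x : ℂ) * wf x) t (p.eval (t : ℂ)) := by
  induction p using Polynomial.induction_on' with
  | add p1 p2 h1 h2 =>
    obtain ⟨q1, h1⟩ := h1
    obtain ⟨q2, h2⟩ := h2
    refine ⟨q1 + q2, fun t ht => ?_⟩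
    have := HasPV.add (integrableOn_poly_w q1) (integrableOn_poly_w q2) (h1 t ht) (h2 t ht)
    simpa [add_mul] using this
  | monomial n a =>
    obtain ⟨q, hq⟩ := exists_q_monomial n
    refine ⟨C a * q, fun t ht => ?_⟩
    simpa [mul_assoc] using (hq t ht).const_mul a

lemma FHT_eq {f : ℝ → ℂ} {t : ℝ} {L : ℂ} (h : HasPV f t L) :
    FHT f t = (Real.pi : ℂ)⁻¹ * L :=
  Tendsto.limUnder_eq (Tendsto.const_mul _ h)

lemma integrableOn_w32 : IntegrableOn (fun x => wf x ^ (3 / 2 : ℝ)) (Ioo (-1) 1) := by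
  have h1 : IntegrableOn (fun x : ℝ => (1 - x) ^ (-(3 / 4) : ℝ)) (Ioc (-1) 1) := by
    refine intervalIntegral.integrableOn_deriv_of_nonneg
      (g := fun x : ℝ => -4 * (1 - x) ^ (1 / 4 : ℝ)) ?_ ?_ ?_
    · refine ContinuousOn.mul continuousOn_const (ContinuousOn.rpow_const (by fun_prop) ?_)
      intro x hx; right; norm_num
    · intro x hx
      have h := (((hasDerivAt_id x).const_sub 1).rpow_const (p := 1 / 4)
        (Or.inl (by have := hx.2; simp; linarith))).const_mul (-4)
      refine h.congr_deriv ?_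
      norm_num
      try ring
    · intro x hx
      exact Real.rpow_nonneg (by linarith [hx.2]) _
  have h2 : IntegrableOn (fun x : ℝ => (1 + x) ^ (-(3 / 4) : ℝ)) (Ioc (-1) 1) := by
    refine intervalIntegral.integrableOn_deriv_of_nonneg
      (g := fun x : ℝ => 4 * (1 + x) ^ (1 / 4 : ℝ)) ?_ ?_ ?_
    · refine ContinuousOn.mul continuousOn_const (ContinuousOn.rpow_const (by fun_prop) ?_)
      intro x hx; right; norm_num
    · intro x hx
      have h := (((hasDerivAt_id x).const_add 1).rpow_const (p := 1 / 4)
        (Or.inl (by have := hx.1; simp; linarith))).const_mul 4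
      refine h.congr_deriv ?_
      norm_num
      try ring
    · intro x hx
      exact Real.rpow_nonneg (by linarith [hx.1]) _
  refine Integrable.mono' ((h1.add h2).mono_set Ioo_subset_Ioc_self)
    (measurable_wf.pow_const _).aestronglyMeasurable ?_
  refine (ae_restrict_iff' measurableSet_Ioo).2 (Eventually.of_forall fun x hx => ?_)
  have ha : 0 < 1 - x := by linarith [hx.2]
  have hb : 0 < 1 + x := by linarith [hx.1]
  have hx0 : 0 < 1 - x ^ 2 := by nlinarith
  rw [Real.norm_of_nonneg (Real.rpow_nonneg (wf_nonneg x) _)]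
  have e : wf x ^ (3 / 2 : ℝ) = (1 - x ^ 2) ^ (-(3 / 4) : ℝ) := by
    unfold wf
    rw [Real.sqrt_eq_rpow, ← Real.rpow_neg hx0.le, ← Real.rpow_mul hx0.le]
    norm_num
  rw [e]
  simp only [Pi.add_apply]
  rcases le_total 0 x with h | h
  · have := Real.rpow_le_rpow_of_nonpos ha (show 1 - x ≤ 1 - x ^ 2 by nlinarith [hx.2])
      (show (-(3 / 4) : ℝ) ≤ 0 by norm_num)
    have := Real.rpow_nonneg hb.le (-(3 / 4) : ℝ)
    linarith
  · have := Real.rpow_le_rpow_of_nonpos hb (show 1 + x ≤ 1 - x ^ 2 by nlinarith [hx.1])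
      (show (-(3 / 4) : ℝ) ≤ 0 by norm_num)
    have := Real.rpow_nonneg ha.le (-(3 / 4) : ℝ)
    linarith

lemma llog_le {a : ℝ} (ha : 0 ≤ a) : a * max (Real.log a) 0 ≤ 2 * a ^ (3 / 2 : ℝ) := by
  have h1 : max (Real.log a) 0 ≤ 2 * a ^ (1 / 2 : ℝ) := by
    apply max_le
    · have := Real.log_le_rpow_div ha (show (0:ℝ) < 1 / 2 by norm_num)
      linarith
    · positivity
  have h2 : a ^ (3 / 2 : ℝ) = a * a ^ (1 / 2 : ℝ) := by
    rcases ha.eq_or_lt with rfl | h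
    · norm_num
    · rw [show (3 / 2 : ℝ) = 1 + 1 / 2 by norm_num, Real.rpow_add h, Real.rpow_one]
  rw [h2]
  nlinarith

lemma memLlogL_poly_w (q : Polynomial ℂ) : MemLlogL (fun x : ℝ => q.eval (x : ℂ) * wf x) := by
  have hm : Measurable (fun x : ℝ => q.eval (x : ℂ) * wf x) :=
    (poly_meas q).mul (Complex.measurable_ofReal.comp measurable_wf)
  refine ⟨hm.aestronglyMeasurable, ?_⟩
  obtain ⟨C, hC0, hC⟩ := poly_bdd q
  refine Integrable.mono' (integrableOn_w32.const_mul (2 * C ^ (3 / 2 : ℝ)))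
    (by
      have := hm.norm
      exact (this.mul ((Real.measurable_log.comp this).max measurable_const)).aestronglyMeasurable) ?_
  refine (ae_restrict_iff' measurableSet_Ioo).2 (Eventually.of_forall fun x hx => ?_)
  rw [Real.norm_of_nonneg (mul_nonneg (norm_nonneg _) (le_max_right _ _))]
  refine (llog_le (norm_nonneg _)).trans ?_
  rw [mul_assoc, ← Real.mul_rpow hC0 (wf_nonneg x)]
  have : ‖q.eval (x : ℂ) * wf x‖ ≤ C * wf x := by
    rw [norm_mul, Complex.norm_real, Real.norm_of_nonneg (wf_nonneg x)]
    exact mul_le_mul_of_nonneg_right (hC x (Ioo_subset_Icc_self hx)) (wf_nonneg x)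
  have := Real.rpow_le_rpow (norm_nonneg _) this (show (0:ℝ) ≤ 3 / 2 by norm_num)
  linarith

lemma exists_complex_poly (k : ℝ → ℂ) (hk : Continuous k) {ε : ℝ} (hε : 0 < ε) :
    ∃ p : Polynomial ℂ, ∀ x ∈ Icc (-1 : ℝ) 1, ‖p.eval (x : ℂ) - k x‖ ≤ ε := by
  obtain ⟨p1, h1⟩ := exists_polynomial_near_of_continuousOn (-1) 1 (fun x => (k x).re)
    (Complex.continuous_re.comp hk).continuousOn (ε / 2) (by positivity)
  obtain ⟨p2, h2⟩ := exists_polynomial_near_of_continuousOn (-1) 1 (fun x => (k x).im)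
    (Complex.continuous_im.comp hk).continuousOn (ε / 2) (by positivity)
  refine ⟨p1.map Complex.ofRealHom + Polynomial.C Complex.I * p2.map Complex.ofRealHom,
    fun x hx => ?_⟩
  have e1 : ∀ p : Polynomial ℝ, (p.map Complex.ofRealHom).eval (x : ℂ) = ((p.eval x : ℝ) : ℂ) := by
    intro p
    have := Polynomial.eval_map_apply (p := p) Complex.ofRealHom x
    simpa using this
  rw [Polynomial.eval_add, Polynomial.eval_mul, Polynomial.eval_C, e1, e1]
  refine (Complex.norm_le_abs_re_add_abs_im _).trans ?_
  have := h1 x hx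
  have := h2 x hx
  simp
  linarith

lemma part_one (g : ℝ → ℂ) (hg : IntegrableOn g (Set.Ioo (-1 : ℝ) 1)) (ε : ℝ) (hε : 0 < ε) :
      ∃ f : ℝ → ℂ, MemLlogL f ∧
        ∫ x in Set.Ioo (-1 : ℝ) 1, ‖FHT f x - g x‖ < ε := by
  obtain ⟨k, _, hk1, hkc, hki⟩ := Integrable.exists_hasCompactSupport_integral_sub_le hg
    (show 0 < ε / 2 by positivity)
  obtain ⟨p, hp⟩ := exists_complex_poly k hkc (show 0 < ε / 8 by positivity)
  obtain ⟨q, hq⟩ := exists_q (Polynomial.C (Real.pi : ℂ) * p)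
  refine ⟨_, memLlogL_poly_w q, ?_⟩
  have hF : ∀ t ∈ Ioo (-1 : ℝ) 1, FHT (fun x : ℝ => q.eval (x : ℂ) * wf x) t = p.eval (t : ℂ) := by
    intro t ht
    rw [FHT_eq (hq t ht)]
    have : (Real.pi : ℂ) ≠ 0 := by exact_mod_cast Real.pi_ne_zero
    simp [this]
  rw [setIntegral_congr_fun (g := fun x : ℝ => ‖p.eval (x : ℂ) - g x‖) measurableSet_Ioo
    (fun x hx => by simp only [hF x hx])]
  have hb : ∫ x in Ioo (-1 : ℝ) 1, ‖p.eval (x : ℂ) - g x‖ ≤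
      ∫ x in Ioo (-1 : ℝ) 1, (ε / 8 + ‖g x - k x‖) := by
    refine integral_mono_of_nonneg (Eventually.of_forall fun x => norm_nonneg _)
      ((integrable_const _).add (hg.sub hki).norm) ?_
    refine (ae_restrict_iff' measurableSet_Ioo).2 (Eventually.of_forall fun x hx => ?_)
    have h1 := hp x (Ioo_subset_Icc_self hx)
    have h2 : p.eval (x : ℂ) - g x = (p.eval (x : ℂ) - k x) - (g x - k x) := by ring
    simp only []
    rw [h2]
    exact (norm_sub_le _ _).trans (by linarith)
  have hgk : Integrable (fun x => ‖g x - k x‖) (volume.restrict (Ioo (-1 : ℝ) 1)) :=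
    (Integrable.sub hg hki).norm
  rw [integral_add (integrable_const _) hgk] at hb
  have : ∫ x in Ioo (-1 : ℝ) 1, ε / 8 = ε / 4 := by
    simp; norm_num; ring
  linarith
def kQ (ε u : ℝ) : ℝ := u / (u ^ 2 + ε ^ 2)
def kP (ε u : ℝ) : ℝ := ε / (u ^ 2 + ε ^ 2)
def QQ (ε : ℝ) (h : ℝ → ℝ) (t : ℝ) : ℝ := ∫ x, h x * kQ ε (x - t)
def PP (ε : ℝ) (h : ℝ → ℝ) (t : ℝ) : ℝ := ∫ x, h x * kP ε (x - t)
def FF (h : ℝ → ℝ) (z : ℂ) : ℂ := ∫ x : ℝ, (h x : ℂ) / ((x : ℂ) - z)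

lemma measurable_kQ (ε : ℝ) : Measurable (kQ ε) := by unfold kQ; fun_prop
lemma measurable_kP (ε : ℝ) : Measurable (kP ε) := by unfold kP; fun_prop

lemma abs_kQ_le {ε : ℝ} (hε : 0 < ε) (u : ℝ) : |kQ ε u| ≤ ε⁻¹ := by
  unfold kQ
  rw [abs_div, abs_of_pos (show 0 < u ^ 2 + ε ^ 2 by positivity), div_le_iff₀ (by positivity),
    inv_mul_eq_div, le_div_iff₀ hε]
  rcases abs_cases u with ⟨h, _⟩ | ⟨h, _⟩ <;> rw [h] <;> nlinarith [sq_nonneg (u - ε), sq_nonneg (u + ε)]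

lemma kP_nonneg {ε : ℝ} (hε : 0 < ε) (u : ℝ) : 0 ≤ kP ε u := by unfold kP; positivity

lemma abs_kP_le {ε : ℝ} (hε : 0 < ε) (u : ℝ) : |kP ε u| ≤ ε⁻¹ := by
  rw [abs_of_nonneg (kP_nonneg hε u)]
  unfold kP
  rw [div_le_iff₀ (by positivity), inv_mul_eq_div, le_div_iff₀ hε]
  nlinarith

lemma integrable_mul_k {f : ℝ → ℝ} (hf : Integrable f) {k : ℝ → ℝ} (hk : Measurable k) {C : ℝ}
    (hC : ∀ u, |k u| ≤ C) (t : ℝ) : Integrable (fun x => f x * k (x - t)) := by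
  refine Integrable.mul_bdd (c := C) hf ?_ ?_
  · exact (hk.comp (by fun_prop)).aestronglyMeasurable
  · exact Eventually.of_forall fun x => hC _

lemma integrable_prod_k {a b : ℝ → ℝ} {μ ν : Measure ℝ} [SFinite μ] [SFinite ν]
    (ha : Integrable a μ) (hb : Integrable b ν) {k : ℝ → ℝ} (hk : Measurable k) {C : ℝ}
    (hC : ∀ u, |k u| ≤ C) : Integrable (fun p : ℝ × ℝ => a p.1 * b p.2 * k (p.2 - p.1)) (μ.prod ν) := by
  refine Integrable.mul_bdd (c := C) (ha.mul_prod hb) ?_ ?_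
  · exact (hk.comp (by fun_prop)).aestronglyMeasurable
  · exact Eventually.of_forall fun x => hC _

lemma kQ_neg (ε u : ℝ) : kQ ε (-u) = - kQ ε u := by unfold kQ; ring

/-- antisymmetry -/
lemma QQ_antisymm {f h : ℝ → ℝ} (hf : Integrable f) (hh : Integrable h) {ε : ℝ} (hε : 0 < ε) :
    ∫ t, h t * QQ ε f t = - ∫ x, f x * QQ ε h x := by
  have h1 := integral_integral_swap (f := fun t x => h t * f x * kQ ε (x - t))
    (integrable_prod_k hh hf (measurable_kQ ε) (abs_kQ_le hε))
  have h2 : ∀ t, ∫ x, h t * f x * kQ ε (x - t) = h t * QQ ε f t := by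
    intro t
    unfold QQ
    rw [← integral_const_mul]
    simp only [mul_assoc]
  have h3 : ∀ x, ∫ t, h t * f x * kQ ε (x - t) = - (f x * QQ ε h x) := by
    intro x
    unfold QQ
    rw [← integral_const_mul, ← integral_neg]
    congr 1
    funext t
    rw [show x - t = -(t - x) by ring, kQ_neg]
    ring
  simp only [h2, h3] at h1
  rw [h1, integral_neg]

structure GoodH (h : ℝ → ℝ) : Prop where
  meas : Measurable h
  bd : ∀ x, |h x| ≤ 1 / 4
  supp : ∀ x, x ∉ Ioo (-1 : ℝ) 1 → h x = 0

lemma GoodH.le_ind {h : ℝ → ℝ} (H : GoodH h) (x : ℝ) :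
    |h x| ≤ (Ioo (-1 : ℝ) 1).indicator (fun _ => (1 / 4 : ℝ)) x := by
  by_cases hx : x ∈ Ioo (-1 : ℝ) 1
  · rw [indicator_of_mem hx]; exact H.bd x
  · rw [indicator_of_notMem hx, H.supp x hx]; simp

lemma GoodH.integrable {h : ℝ → ℝ} (H : GoodH h) : Integrable h := by
  have : Integrable ((Ioo (-1 : ℝ) 1).indicator (fun _ => (1 / 4 : ℝ))) :=
    (integrable_indicator_iff measurableSet_Ioo).2 (integrableOn_const (by simp))
  exact this.mono' H.meas.aestronglyMeasurable (Eventually.of_forall H.le_ind)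

lemma GoodH.integral_le {h : ℝ → ℝ} (H : GoodH h) : ∫ x, |h x| ≤ 1 / 2 := by
  have : Integrable ((Ioo (-1 : ℝ) 1).indicator (fun _ => (1 / 4 : ℝ))) :=
    (integrable_indicator_iff measurableSet_Ioo).2 (integrableOn_const (by simp))
  refine (integral_mono H.integrable.norm this H.le_ind).trans ?_
  rw [integral_indicator measurableSet_Ioo]
  simp; norm_num

lemma sub_ne {x : ℝ} {z : ℂ} (hz : 0 < z.im) : (x : ℂ) - z ≠ 0 := by
  intro h
  have := congrArg Complex.im h
  simp at this
  linarith

lemma norm_sub_ge_im (x : ℝ) (z : ℂ) : z.im ≤ ‖(x : ℂ) - z‖ := by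
  have := Complex.abs_im_le_norm ((x : ℂ) - z)
  simp at this
  exact (le_abs_self _).trans this

lemma FF_meas {h : ℝ → ℝ} (H : GoodH h) (z : ℂ) :
    Measurable (fun x : ℝ => (h x : ℂ) / ((x : ℂ) - z)) := by
  have := H.meas
  fun_prop

lemma FF_integrable {h : ℝ → ℝ} (H : GoodH h) {z : ℂ} (hz : 0 < z.im) :
    Integrable (fun x : ℝ => (h x : ℂ) / ((x : ℂ) - z)) := by
  refine Integrable.mono' (H.integrable.norm.mul_const z.im⁻¹) (FF_meas H z).aestronglyMeasurable ?_
  refine Eventually.of_forall fun x => ?_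
  rw [norm_div, Complex.norm_real, div_eq_mul_inv]
  exact mul_le_mul_of_nonneg_left (inv_anti₀ hz (norm_sub_ge_im x z)) (norm_nonneg _)

lemma FF_diff {h : ℝ → ℝ} (H : GoodH h) {z : ℂ} (hz : 0 < z.im) : DifferentiableAt ℂ (FF h) z := by
  have hs : {w : ℂ | z.im / 2 < w.im} ∈ nhds z :=
    (isOpen_lt continuous_const Complex.continuous_im).mem_nhds (by simp; linarith)
  have := hasDerivAt_integral_of_dominated_loc_of_deriv_le (μ := (volume : Measure ℝ))
    (F := fun (z : ℂ) (x : ℝ) => (h x : ℂ) / ((x : ℂ) - z))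
    (F' := fun (z : ℂ) (x : ℝ) => (h x : ℂ) / ((x : ℂ) - z) ^ 2)
    (bound := fun x => |h x| * ((z.im / 2) ^ 2)⁻¹) hs
    (Eventually.of_forall fun w => (FF_meas H w).aestronglyMeasurable)
    (FF_integrable H hz)
    (by
      have := H.meas
      exact (by fun_prop : Measurable fun x : ℝ => (h x : ℂ) / ((x : ℂ) - z) ^ 2).aestronglyMeasurable)
    (Eventually.of_forall fun x w hw => by
      have hw' : z.im / 2 < w.im := hw
      rw [norm_div, Complex.norm_real, div_eq_mul_inv, norm_pow]
      refine mul_le_mul_of_nonneg_left (inv_anti₀ (by positivity) ?_) (norm_nonneg _)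
      exact pow_le_pow_left₀ (by positivity) (hw'.le.trans (norm_sub_ge_im x w)) 2)
    (H.integrable.norm.mul_const _)
    (Eventually.of_forall fun x w hw => by
      have hw' : z.im / 2 < w.im := hw
      have h0 := sub_ne (x := x) (z := w) (by linarith)
      have h1 : HasDerivAt (fun w : ℂ => (x : ℂ) - w) (-1) w := by
        simpa using (hasDerivAt_id w).const_sub (x : ℂ)
      have h2 := (h1.inv h0).const_mul (h x : ℂ)
      simp only [div_eq_mul_inv]
      refine h2.congr_deriv ?_
      simp)
  exact this.2.differentiableAt

lemma FF_norm_le {h : ℝ → ℝ} (H : GoodH h) {z : ℂ} (hz : 3 ≤ ‖z‖) : ‖FF h z‖ ≤ ‖z‖⁻¹ := by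
  unfold FF
  have hb : ∀ x : ℝ, ‖(h x : ℂ) / ((x : ℂ) - z)‖ ≤ |h x| * (2 * ‖z‖⁻¹) := by
    intro x
    rw [norm_div, Complex.norm_real, div_eq_mul_inv, Real.norm_eq_abs]
    by_cases hx : x ∈ Ioo (-1 : ℝ) 1
    · refine mul_le_mul_of_nonneg_left ?_ (abs_nonneg _)
      have h1 : ‖z‖ / 2 ≤ ‖(x : ℂ) - z‖ := by
        have h2 := norm_sub_norm_le z (x : ℂ)
        rw [norm_sub_rev] at h2
        have h3 : ‖(x : ℂ)‖ ≤ 1 := by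
          rw [Complex.norm_real]; exact abs_le.2 ⟨hx.1.le, hx.2.le⟩
        linarith
      calc _ ≤ (‖z‖ / 2)⁻¹ := inv_anti₀ (by linarith) h1
        _ = _ := by rw [inv_div]; ring
    · rw [H.supp x hx]; simp
  refine (norm_integral_le_of_norm_le (H.integrable.norm.mul_const _) (Eventually.of_forall hb)).trans ?_
  rw [integral_mul_const]
  have := H.integral_le
  have h0 : 0 < ‖z‖⁻¹ := by have : 0 < ‖z‖ := by linarith
                            positivity
  simp only [Real.norm_eq_abs]
  nlinarith

lemma FF_re_im {h : ℝ → ℝ} (H : GoodH h) {ε : ℝ} (hε : 0 < ε) (t : ℝ) :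
    FF h ((t : ℂ) + (ε : ℂ) * Complex.I) = (QQ ε h t : ℂ) + (PP ε h t : ℂ) * Complex.I := by
  unfold FF QQ PP
  rw [← integral_complex_ofReal, ← integral_complex_ofReal, ← integral_mul_const, ← integral_add]
  · congr 1
    funext x
    have h0 := sub_ne (x := x) (z := (t : ℂ) + (ε : ℂ) * Complex.I) (by simpa using hε)
    have h1 : ((x - t) ^ 2 + ε ^ 2 : ℝ) ≠ 0 := by positivity
    have h2 : ((x : ℂ) - t) ^ 2 + (ε : ℂ) ^ 2 ≠ 0 := by exact_mod_cast h1
    unfold kQ kP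
    push_cast
    rw [div_eq_iff h0]
    field_simp
    ring_nf
    rw [Complex.I_sq]
    ring
  · exact (integrable_mul_k H.integrable (measurable_kQ ε) (abs_kQ_le hε) t).ofReal
  · exact ((integrable_mul_k H.integrable (measurable_kP ε) (abs_kP_le hε) t).ofReal).mul_const _

lemma norm_cosh_sub_one_le {w : ℂ} (hw : ‖w‖ ≤ 1) : ‖Complex.cosh w - 1‖ ≤ ‖w‖ ^ 2 := by
  have h1 := Complex.norm_exp_sub_one_sub_id_le hw
  have h2 := Complex.norm_exp_sub_one_sub_id_le (x := -w) (by simpa using hw)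
  rw [norm_neg] at h2
  have e : Complex.cosh w - 1 = ((Complex.exp w - 1 - w) + (Complex.exp (-w) - 1 - -w)) / 2 := by
    rw [Complex.cosh]; ring
  rw [e, norm_div]
  have := norm_add_le (Complex.exp w - 1 - w) (Complex.exp (-w) - 1 - -w)
  simp only [Complex.norm_ofNat]
  linarith

lemma contour {h : ℝ → ℝ} (H : GoodH h) {ε R : ℝ} (hε : 0 < ε) (hR : 3 ≤ R) :
    ‖∫ x in (-R)..R, (Complex.cosh (FF h ((x : ℂ) + (ε : ℂ) * Complex.I)) - 1)‖ ≤ 4 / R := by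
  set K : ℂ → ℂ := fun z => Complex.cosh (FF h z) - 1 with hK
  have hR0 : 0 < R := by linarith
  have hrect := Complex.integral_boundary_rect_eq_zero_of_differentiableOn K
    (⟨-R, ε⟩ : ℂ) (⟨R, ε + R⟩ : ℂ) (by
      intro z hz
      have h1 : z.im ∈ uIcc ε (ε + R) := hz.2
      rw [uIcc_of_le (by linarith)] at h1
      have := FF_diff H (z := z) (by linarith [h1.1])
      exact ((this.ccosh).sub_const 1).differentiableWithinAt)
  simp only [] at hrect
  have hKb : ∀ z : ℂ, R ≤ ‖z‖ → ‖K z‖ ≤ R⁻¹ ^ 2 := by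
    intro z hz
    have h1 := FF_norm_le H (z := z) (by linarith)
    have h2 : ‖z‖⁻¹ ≤ R⁻¹ := inv_anti₀ hR0 hz
    have h3 : R⁻¹ ≤ 1 := inv_le_one_of_one_le₀ (by linarith)
    refine (norm_cosh_sub_one_le (by linarith)).trans ?_
    exact pow_le_pow_left₀ (norm_nonneg _) (by linarith) 2
  have b1 : ‖∫ x in (-R)..R, K ((x : ℂ) + ((ε + R : ℝ) : ℂ) * Complex.I)‖ ≤ R⁻¹ ^ 2 * |R - -R| := by
    refine intervalIntegral.norm_integral_le_of_norm_le_const fun x _ => hKb _ ?_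
    have := Complex.abs_im_le_norm ((x : ℂ) + ((ε + R : ℝ) : ℂ) * Complex.I)
    simp at this
    rw [abs_of_pos (by linarith)] at this
    push_cast
    linarith
  have b2 : ‖∫ y in ε..(ε + R), K ((R : ℂ) + (y : ℂ) * Complex.I)‖ ≤ R⁻¹ ^ 2 * |ε + R - ε| := by
    refine intervalIntegral.norm_integral_le_of_norm_le_const fun x _ => hKb _ ?_
    have := Complex.abs_re_le_norm ((R : ℂ) + (x : ℂ) * Complex.I)
    simp at this
    rw [abs_of_pos (by linarith)] at this
    linarith
  have b3 : ‖∫ y in ε..(ε + R), K (((-R : ℝ) : ℂ) + (y : ℂ) * Complex.I)‖ ≤ R⁻¹ ^ 2 * |ε + R - ε| := by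
    refine intervalIntegral.norm_integral_le_of_norm_le_const fun x _ => hKb _ ?_
    have := Complex.abs_re_le_norm (((-R : ℝ) : ℂ) + (x : ℂ) * Complex.I)
    simp at this
    rw [abs_of_pos (by linarith)] at this
    push_cast
    linarith
  have e1 : |R - -R| = 2 * R := by rw [abs_of_pos] <;> linarith
  have e2 : |ε + R - ε| = R := by rw [abs_of_pos] <;> linarith
  rw [e1] at b1
  rw [e2] at b2 b3
  have e3 : R⁻¹ ^ 2 * (2 * R) + R⁻¹ ^ 2 * R + R⁻¹ ^ 2 * R = 4 / R := by field_simp; ring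
  have e4 : ∫ x in (-R)..R, K ((x : ℂ) + (ε : ℂ) * Complex.I) =
      (∫ x in (-R)..R, K ((x : ℂ) + ((ε + R : ℝ) : ℂ) * Complex.I))
      - Complex.I • (∫ y in ε..(ε + R), K ((R : ℂ) + (y : ℂ) * Complex.I))
      + Complex.I • (∫ y in ε..(ε + R), K (((-R : ℝ) : ℂ) + (y : ℂ) * Complex.I)) := by
    linear_combination hrect
  change ‖∫ x in (-R)..R, K ((x : ℂ) + (ε : ℂ) * Complex.I)‖ ≤ 4 / R
  rw [e4]
  refine (norm_add_le _ _).trans ?_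
  refine (add_le_add (norm_sub_le _ _) le_rfl).trans ?_
  simp only [norm_smul, Complex.norm_I, one_mul]
  linarith

lemma integral_kP_le {ε : ℝ} (hε : 0 < ε) (x R : ℝ) :
    ∫ t in (-R)..R, kP ε (x - t) ≤ Real.pi := by
  have hd : ∀ t ∈ uIcc (-R) R, HasDerivAt (fun t => Real.arctan ((t - x) / ε)) (kP ε (x - t)) t := by
    intro t _
    have := (((hasDerivAt_id t).sub_const x).div_const ε).arctan
    refine this.congr_deriv ?_
    unfold kP
    simp only [id]
    have h1 : (x - t) ^ 2 + ε ^ 2 ≠ 0 := by positivity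
    have h2 : 1 + ((t - x) / ε) ^ 2 ≠ 0 := by positivity
    field_simp
    ring
  have hc : Continuous (fun t => kP ε (x - t)) := by
    unfold kP
    exact Continuous.div (by fun_prop) (by fun_prop) (fun t => by positivity)
  rw [intervalIntegral.integral_eq_sub_of_hasDerivAt hd (hc.intervalIntegrable _ _)]
  have := Real.arctan_lt_pi_div_two ((R - x) / ε)
  have := Real.neg_pi_div_two_lt_arctan ((-R - x) / ε)
  linarith

lemma PP_abs_le {h : ℝ → ℝ} (H : GoodH h) {ε : ℝ} (hε : 0 < ε) (t : ℝ) :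
    |PP ε h t| ≤ ∫ x, |h x| * kP ε (x - t) := by
  unfold PP
  rw [← Real.norm_eq_abs]
  refine norm_integral_le_of_norm_le
    (integrable_mul_k H.integrable.norm (measurable_kP ε) (abs_kP_le hε) t)
    (Eventually.of_forall fun x => ?_)
  rw [norm_mul, Real.norm_of_nonneg (kP_nonneg hε _), Real.norm_eq_abs]

lemma PP_le_one {h : ℝ → ℝ} (H : GoodH h) {ε : ℝ} (hε : 0 < ε) (t : ℝ) : |PP ε h t| ≤ 1 := by
  refine (PP_abs_le H hε t).trans ?_
  have h1 : ∀ x, |h x| * kP ε (x - t) ≤ (Ioc (-1 : ℝ) 1).indicator (fun x => 1 / 4 * kP ε (t - x)) x := by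
    intro x
    have e : kP ε (x - t) = kP ε (t - x) := by unfold kP; rw [show (x - t) ^ 2 = (t - x) ^ 2 by ring]
    by_cases hx : x ∈ Ioo (-1 : ℝ) 1
    · rw [indicator_of_mem (Ioo_subset_Ioc_self hx), e]
      exact mul_le_mul_of_nonneg_right (H.bd x) (kP_nonneg hε _)
    · rw [H.supp x hx]
      simp only [abs_zero, zero_mul]
      exact indicator_nonneg (fun x _ => mul_nonneg (by norm_num) (kP_nonneg hε _)) x
  have hc : Continuous (fun x => 1 / 4 * kP ε (t - x)) := by
    unfold kP
    exact continuous_const.mul (Continuous.div (by fun_prop) (by fun_prop) (fun t => by positivity))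
  have hi : Integrable ((Ioc (-1 : ℝ) 1).indicator (fun x => 1 / 4 * kP ε (t - x))) :=
    (integrable_indicator_iff measurableSet_Ioc).2 (hc.integrableOn_Ioc)
  refine (integral_mono (integrable_mul_k H.integrable.norm (measurable_kP ε) (abs_kP_le hε) t)
    hi h1).trans ?_
  rw [integral_indicator measurableSet_Ioc, integral_const_mul,
    ← intervalIntegral.integral_of_le (by norm_num)]
  have := integral_kP_le hε t 1
  have := Real.pi_le_four
  linarith

lemma FF_line_cont {h : ℝ → ℝ} (H : GoodH h) {ε : ℝ} (hε : 0 < ε) :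
    Continuous (fun t : ℝ => FF h ((t : ℂ) + (ε : ℂ) * Complex.I)) := by
  rw [continuous_iff_continuousAt]
  intro t
  have h1 := (FF_diff H (z := (t : ℂ) + (ε : ℂ) * Complex.I) (by simpa using hε)).continuousAt
  exact ContinuousAt.comp (f := fun t : ℝ => (t : ℂ) + (ε : ℂ) * Complex.I) h1 (by fun_prop)

lemma QQ_cont {h : ℝ → ℝ} (H : GoodH h) {ε : ℝ} (hε : 0 < ε) : Continuous (QQ ε h) := by
  refine (Complex.continuous_re.comp (FF_line_cont H hε)).congr fun t => ?_
  simp [FF_re_im H hε]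

lemma PP_cont {h : ℝ → ℝ} (H : GoodH h) {ε : ℝ} (hε : 0 < ε) : Continuous (PP ε h) := by
  refine (Complex.continuous_im.comp (FF_line_cont H hε)).congr fun t => ?_
  simp [FF_re_im H hε]

lemma PP_integral_le {h : ℝ → ℝ} (H : GoodH h) {ε R : ℝ} (hε : 0 < ε) (hR : 0 ≤ R) :
    ∫ t in (-R)..R, |PP ε h t| ≤ Real.pi * ∫ x, |h x| := by
  rw [intervalIntegral.integral_of_le (by linarith)]
  have hsw := integral_integral_swap (μ := volume.restrict (Ioc (-R) R)) (ν := volume)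
    (f := fun t x => (1 : ℝ) * |h x| * kP ε (x - t))
    (integrable_prod_k (a := fun _ => (1 : ℝ)) (integrable_const 1) H.integrable.norm
      (measurable_kP ε) (abs_kP_le hε))
  have hint := (integrable_prod_k (μ := volume.restrict (Ioc (-R) R)) (ν := volume)
     (a := fun _ => (1 : ℝ)) (integrable_const 1) H.integrable.norm
      (measurable_kP ε) (abs_kP_le hε))
  have hi1 := hint.integral_prod_left
  have hi2 := hint.integral_prod_right
  simp only [one_mul, Real.norm_eq_abs] at hsw hi1 hi2
  calc ∫ t in Ioc (-R) R, |PP ε h t| ≤ ∫ t in Ioc (-R) R, ∫ x, |h x| * kP ε (x - t) :=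
        integral_mono ((PP_cont H hε).abs.integrableOn_Ioc) hi1 (fun t => PP_abs_le H hε t)
    _ = ∫ x, ∫ t in Ioc (-R) R, |h x| * kP ε (x - t) := hsw
    _ ≤ ∫ x, |h x| * Real.pi := by
        refine integral_mono hi2 (H.integrable.norm.mul_const _) fun x => ?_
        simp only []
        rw [integral_const_mul, ← intervalIntegral.integral_of_le (by linarith)]
        exact mul_le_mul_of_nonneg_left (integral_kP_le hε x R) (abs_nonneg _)
    _ = _ := by rw [integral_mul_const, mul_comm]

lemma cosh_bound {h : ℝ → ℝ} (H : GoodH h) {ε : ℝ} (hε : 0 < ε) :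
    ∫ t in (-1 : ℝ)..1, (Real.cosh (QQ ε h t) - 1) ≤ 4 * ∫ x, |h x| := by
  have hQ := QQ_cont H hε
  have hP := PP_cont H hε
  have key : ∀ R : ℝ, 3 ≤ R →
      ∫ t in (-1 : ℝ)..1, (Real.cosh (QQ ε h t) - 1) ≤ 8 / R + 4 * ∫ x, |h x| := by
    intro R hR
    have hre : (∫ x in (-R)..R, (Complex.cosh (FF h ((x : ℂ) + (ε : ℂ) * Complex.I)) - 1)).re =
        ∫ x in (-R)..R, (Real.cosh (QQ ε h x) * Real.cos (PP ε h x) - 1) := by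
      have hc : Continuous (fun x : ℝ => Complex.cosh (FF h ((x : ℂ) + (ε : ℂ) * Complex.I)) - 1) :=
        (Complex.continuous_cosh.comp (FF_line_cont H hε)).sub continuous_const
      have := Complex.reCLM.intervalIntegral_comp_comm (hc.intervalIntegrable (μ := volume) (-R) R)
      simp only [Complex.reCLM_apply] at this
      rw [← this]
      congr 1
      funext x
      rw [FF_re_im H hε, Complex.cosh_add, Complex.cosh_mul_I, Complex.sinh_mul_I]
      rw [← Complex.ofReal_cosh, ← Complex.ofReal_cos, ← Complex.ofReal_sinh, ← Complex.ofReal_sin]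
      rw [Complex.sub_re, Complex.add_re, ← Complex.ofReal_mul, Complex.ofReal_re, ← mul_assoc,
        ← Complex.ofReal_mul, Complex.re_ofReal_mul, Complex.I_re, Complex.one_re]
      ring
    have h1 : ∫ x in (-R)..R, (Real.cosh (QQ ε h x) * Real.cos (PP ε h x) - 1) ≤ 4 / R := by
      rw [← hre]
      exact (Complex.re_le_norm _).trans (contour H hε hR)
    have h2 : ∫ x in (-R)..R, ((Real.cosh (QQ ε h x) - 1) / 2 - |PP ε h x| / 2) ≤ 4 / R := by
      refine le_trans ?_ h1
      refine intervalIntegral.integral_mono_on (by linarith) ?_ ?_ ?_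
      · exact Continuous.intervalIntegrable (by fun_prop) _ _
      · exact Continuous.intervalIntegrable (by fun_prop) _ _
      · intro x _
        have hp := PP_le_one H hε x
        have hcos := Real.one_sub_sq_div_two_le_cos (x := PP ε h x)
        have hcosh := Real.one_le_cosh (QQ ε h x)
        have hp2 : PP ε h x ^ 2 ≤ |PP ε h x| := by
          rw [← sq_abs]; nlinarith [abs_nonneg (PP ε h x)]
        have hc : 1 - |PP ε h x| / 2 ≤ Real.cos (PP ε h x) := by linarith
        nlinarith [abs_nonneg (PP ε h x)]
    have hi1 : IntervalIntegrable (fun x => (Real.cosh (QQ ε h x) - 1) / 2) volume (-R) R :=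
      Continuous.intervalIntegrable (by fun_prop) _ _
    have hi2 : IntervalIntegrable (fun x => |PP ε h x| / 2) volume (-R) R :=
      Continuous.intervalIntegrable (by fun_prop) _ _
    rw [intervalIntegral.integral_sub hi1 hi2, intervalIntegral.integral_div,
      intervalIntegral.integral_div] at h2
    have h3 := PP_integral_le H hε (R := R) (by linarith)
    have h4 : ∫ t in (-1 : ℝ)..1, (Real.cosh (QQ ε h t) - 1) ≤
        ∫ t in (-R)..R, (Real.cosh (QQ ε h t) - 1) := by
      refine intervalIntegral.integral_mono_interval (by linarith) (by norm_num) (by linarith) ?_ ?_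
      · refine Eventually.of_forall fun x => ?_
        · have := Real.one_le_cosh (QQ ε h x)
          simp only [Pi.zero_apply]; linarith
      · exact Continuous.intervalIntegrable (u := fun t => Real.cosh (QQ ε h t) - 1) (by fun_prop) _ _
    have h5 : 0 ≤ ∫ x, |h x| := integral_nonneg fun x => abs_nonneg _
    have h6 : Real.pi * ∫ x, |h x| ≤ 4 * ∫ x, |h x| :=
      mul_le_mul_of_nonneg_right Real.pi_le_four h5
    have h7 : 8 / R = 2 * (4 / R) := by ring
    linarith
  have hlim : Tendsto (fun R : ℝ => 8 / R + 4 * ∫ x, |h x|) atTop (nhds (0 + 4 * ∫ x, |h x|)) :=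
    (tendsto_const_nhds.div_atTop tendsto_id).add tendsto_const_nhds
  rw [zero_add] at hlim
  refine ge_of_tendsto hlim ?_
  filter_upwards [eventually_ge_atTop 3] with R hR using key R hR
lemma half_sq_le_cosh (q : ℝ) : q ^ 2 / 2 ≤ Real.cosh q - 1 := by
  rw [← Real.cosh_abs, ← sq_abs]
  have h0 : 0 ≤ |q| := abs_nonneg q
  generalize |q| = b at *
  have h1 : b / 2 ≤ Real.sinh (b / 2) := Real.self_le_sinh_iff.2 (by linarith)
  have h2 : Real.cosh b = Real.cosh (b / 2) ^ 2 + Real.sinh (b / 2) ^ 2 := by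
    rw [← Real.cosh_two_mul]; congr 1; ring
  rw [h2, Real.cosh_sq]
  nlinarith

def trL (M a : ℝ) : ℝ := if M < |a| then |a| * max (Real.log |a|) 0 else 0

lemma trL_nonneg (M a : ℝ) : 0 ≤ trL M a := by
  unfold trL; split_ifs
  · exact mul_nonneg (abs_nonneg _) (le_max_right _ _)
  · exact le_rfl

lemma measurable_trL (M : ℝ) : Measurable (trL M) := by
  unfold trL
  refine Measurable.ite (measurableSet_lt measurable_const (by fun_prop)) (by fun_prop) measurable_const

lemma trL_le (M a : ℝ) : trL M a ≤ |a| * max (Real.log |a|) 0 := by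
  unfold trL; split_ifs
  · exact le_rfl
  · exact mul_nonneg (abs_nonneg _) (le_max_right _ _)

lemma young {M δ : ℝ} (hM : 3 ≤ M) (hδ : 0 < δ) (a q : ℝ) :
    |a| * |q| ≤ δ + (M ^ 2 / (2 * δ) + 8) * (Real.cosh q - 1) + 2 * trL M a := by
  have hc := half_sq_le_cosh q
  have hc0 : 0 ≤ Real.cosh q - 1 := by linarith [Real.one_le_cosh q]
  have hA : 0 ≤ M ^ 2 / (2 * δ) := by positivity
  by_cases h : M < |a|
  · have e : trL M a = |a| * max (Real.log |a|) 0 := by unfold trL; rw [if_pos h]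
    rw [e]
    have hb := abs_nonneg q
    rw [← Real.cosh_abs] at hc0 ⊢
    generalize |q| = b at *
    have ha : 0 < |a| := by linarith
    generalize |a| = a at *
    have hl : 1 ≤ Real.log a := by
      rw [Real.le_log_iff_exp_le ha]
      linarith [Real.exp_one_lt_d9]
    rw [max_eq_left (by linarith)]
    by_cases hb2 : b ≤ 2 * Real.log a
    · have h1 : a * b ≤ a * (2 * Real.log a) := mul_le_mul_of_nonneg_left hb2 ha.le
      have : 0 ≤ (M ^ 2 / (2 * δ) + 8) * (Real.cosh b - 1) := by positivity
      linarith
    · push Not at hb2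
      have h1 : a ≤ Real.exp (b / 2) := by
        rw [← Real.log_le_iff_le_exp ha]; linarith
      have h2 : b / 2 + 1 ≤ Real.exp (b / 2) := Real.add_one_le_exp _
      have h3 : Real.exp (b / 2) * Real.exp (b / 2) = Real.exp b := by rw [← Real.exp_add]; ring_nf
      have h4 : a * b ≤ 2 * Real.exp b := by
        rw [← h3]
        have : b ≤ 2 * Real.exp (b / 2) := by linarith
        calc a * b ≤ Real.exp (b / 2) * (2 * Real.exp (b / 2)) := by gcongr
          _ = _ := by ring
      have h5 : 4 ≤ Real.exp b := by rw [← h3]; nlinarith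
      have h6 : Real.exp b / 4 ≤ Real.cosh b - 1 := by
        rw [Real.cosh_eq]
        have := Real.exp_pos (-b)
        linarith
      have h7 : 0 ≤ M ^ 2 / (2 * δ) * (Real.cosh b - 1) := by positivity
      have h8 : 0 ≤ a * Real.log a := by positivity
      linarith
  · push Not at h
    have h1 : |a| * |q| ≤ M * |q| := mul_le_mul_of_nonneg_right h (abs_nonneg _)
    have h2 : M * |q| ≤ δ + M ^ 2 / (2 * δ) * (q ^ 2 / 2) := by
      have e : δ + M ^ 2 / (2 * δ) * (q ^ 2 / 2) - M * |q| = (2 * δ - M * |q|) ^ 2 / (4 * δ) := by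
        rw [← sq_abs q]; field_simp; ring
      have : 0 ≤ (2 * δ - M * |q|) ^ 2 / (4 * δ) := by positivity
      linarith
    have h3 : M ^ 2 / (2 * δ) * (q ^ 2 / 2) ≤ M ^ 2 / (2 * δ) * (Real.cosh q - 1) :=
      mul_le_mul_of_nonneg_left hc hA
    have := trL_nonneg M a
    linarith

structure GoodF (f : ℝ → ℝ) : Prop where
  int : Integrable f
  supp : ∀ x, x ∉ Ioo (-1 : ℝ) 1 → f x = 0
  llog : Integrable (fun x => |f x| * max (Real.log |f x|) 0)

lemma QQ_f_cont {f : ℝ → ℝ} (hf : Integrable f) {ε : ℝ} (hε : 0 < ε) : Continuous (QQ ε f) := by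
  unfold QQ
  refine continuous_of_dominated (bound := fun x => |f x| * ε⁻¹) ?_ ?_ (hf.norm.mul_const _) ?_
  · exact fun t => (integrable_mul_k hf (measurable_kQ ε) (abs_kQ_le hε) t).aestronglyMeasurable
  · intro t
    refine Eventually.of_forall fun x => ?_
    rw [norm_mul]
    exact mul_le_mul_of_nonneg_left (abs_kQ_le hε _) (norm_nonneg _)
  · refine Eventually.of_forall fun x => ?_
    unfold kQ
    exact continuous_const.mul (Continuous.div (by fun_prop) (by fun_prop) (fun t => by positivity))

lemma trL_integrable {f : ℝ → ℝ} (F : GoodF f) (M : ℝ) : Integrable (fun x => trL M (f x)) := by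
  refine F.llog.mono' ((measurable_trL M).comp_aemeasurable F.int.aemeasurable).aestronglyMeasurable
    (Eventually.of_forall fun x => ?_)
  rw [Real.norm_of_nonneg (trL_nonneg _ _)]
  exact trL_le _ _

lemma trL_tendsto {f : ℝ → ℝ} (F : GoodF f) :
    Tendsto (fun M : ℝ => ∫ x, trL M (f x)) atTop (nhds 0) := by
  have : Tendsto (fun M : ℝ => ∫ x, trL M (f x)) atTop (nhds (∫ _ : ℝ, (0 : ℝ))) := by
    refine tendsto_integral_filter_of_dominated_convergence _
      (Eventually.of_forall fun M => (trL_integrable F M).aestronglyMeasurable) ?_ F.llog ?_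
    · refine Eventually.of_forall fun M => Eventually.of_forall fun x => ?_
      rw [Real.norm_of_nonneg (trL_nonneg _ _)]
      exact trL_le _ _
    · refine Eventually.of_forall fun x => tendsto_const_nhds.congr' ?_
      filter_upwards [eventually_ge_atTop |f x|] with M hM
      unfold trL
      rw [if_neg (not_lt.2 hM)]
  simpa using this

lemma QQ_unif {f : ℝ → ℝ} (F : GoodF f) {η : ℝ} (hη : 0 < η) :
    ∃ δ > 0, ∀ ε > 0, ∀ E : Set ℝ, MeasurableSet E → E ⊆ Ioo (-1 : ℝ) 1 →
      volume.real E ≤ δ → ∫ t in E, |QQ ε f t| ≤ η := by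
  obtain ⟨M, hM3, hM⟩ := ((eventually_ge_atTop (3 : ℝ)).and
    ((trL_tendsto F).eventually (gt_mem_nhds (show 0 < η / 32 by positivity)))).exists
  set δ₁ := η / 32 with hδ₁
  have hδ₁p : 0 < δ₁ := by positivity
  set A := M ^ 2 / (2 * δ₁) + 8 with hA
  have hAp : 0 < A := by positivity
  refine ⟨η / (16 * A), by positivity, fun ε hε E hE hEI hvol => ?_⟩
  have hQc := QQ_f_cont F.int hε
  set h : ℝ → ℝ := E.indicator (fun t => if 0 ≤ QQ ε f t then 1 / 4 else -(1 / 4)) with hh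
  have hval : ∀ t, |h t| = E.indicator (fun _ => (1 / 4 : ℝ)) t := by
    intro t
    by_cases ht : t ∈ E
    · rw [hh, indicator_of_mem ht, indicator_of_mem ht]
      split_ifs <;> norm_num
    · rw [hh, indicator_of_notMem ht, indicator_of_notMem ht, abs_zero]
  have H : GoodH h := by
    refine ⟨?_, ?_, ?_⟩
    · refine Measurable.indicator ?_ hE
      exact Measurable.ite (measurableSet_le measurable_const hQc.measurable)
        measurable_const measurable_const
    · intro x
      rw [hval]
      refine indicator_le' (fun _ _ => le_rfl) (fun _ _ => by norm_num) x
    · intro x hx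
      rw [hh, indicator_of_notMem (fun hxE => hx (hEI hxE))]
  have hEfin : volume E ≠ ⊤ := ne_top_of_le_ne_top (by simp) (measure_mono hEI)
  have hint : ∫ t, |h t| = volume.real E * (1 / 4) := by
    simp only [hval]
    rw [integral_indicator hE]
    simp
  have e1 : ∫ t in E, |QQ ε f t| = 4 * ∫ t, h t * QQ ε f t := by
    rw [← integral_indicator hE, ← integral_const_mul]
    congr 1
    funext t
    by_cases ht : t ∈ E
    · rw [hh, indicator_of_mem ht, indicator_of_mem ht]
      split_ifs with h0
      · rw [abs_of_nonneg h0]; ring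
      · rw [abs_of_neg (not_le.1 h0)]; ring
    · rw [hh, indicator_of_notMem ht, indicator_of_notMem ht]; simp
  rw [e1, QQ_antisymm F.int H.integrable hε]
  have hcb := cosh_bound H hε
  have hQh := QQ_cont H hε
  set B : ℝ → ℝ := fun x => δ₁ + A * (Real.cosh (QQ ε h x) - 1) + 2 * trL M (f x) with hB
  have hi1 : IntegrableOn (fun _ : ℝ => δ₁) (Ioc (-1 : ℝ) 1) := integrableOn_const (by simp)
  have hi2 : IntegrableOn (fun x : ℝ => A * (Real.cosh (QQ ε h x) - 1)) (Ioc (-1 : ℝ) 1) :=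
    Continuous.integrableOn_Ioc (by fun_prop)
  have hi3 : IntegrableOn (fun x : ℝ => 2 * trL M (f x)) (Ioc (-1 : ℝ) 1) :=
    ((trL_integrable F M).const_mul 2).integrableOn
  have hBi : IntegrableOn B (Ioc (-1 : ℝ) 1) := (hi1.add hi2).add hi3
  have hbound : |∫ x, f x * QQ ε h x| ≤ ∫ x, (Ioc (-1 : ℝ) 1).indicator B x := by
    rw [← Real.norm_eq_abs]
    refine norm_integral_le_of_norm_le ((integrable_indicator_iff measurableSet_Ioc).2 hBi)
      (Eventually.of_forall fun x => ?_)
    by_cases hx : x ∈ Ioo (-1 : ℝ) 1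
    · rw [indicator_of_mem (Ioo_subset_Ioc_self hx), norm_mul]
      exact young hM3 hδ₁p (f x) (QQ ε h x)
    · rw [F.supp x hx, zero_mul, norm_zero]
      refine indicator_nonneg (fun x _ => ?_) x
      exact le_trans (by positivity) (young hM3 hδ₁p (f x) (QQ ε h x))
  rw [integral_indicator measurableSet_Ioc] at hbound
  have hsplit : ∫ x in Ioc (-1 : ℝ) 1, B x = 2 * δ₁ + A * (∫ x in (-1 : ℝ)..1, (Real.cosh (QQ ε h x) - 1))
      + 2 * ∫ x in Ioc (-1 : ℝ) 1, trL M (f x) := by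
    have hi12 : IntegrableOn (fun x => δ₁ + A * (Real.cosh (QQ ε h x) - 1)) (Ioc (-1) 1) :=
      hi1.add hi2
    rw [hB, integral_add hi12 hi3, integral_add hi1 hi2, integral_const_mul,
      integral_const_mul, intervalIntegral.integral_of_le (by norm_num)]
    simp; norm_num
  have h3 : ∫ x in Ioc (-1 : ℝ) 1, trL M (f x) ≤ ∫ x, trL M (f x) :=
    setIntegral_le_integral (trL_integrable F M) (Eventually.of_forall fun x => trL_nonneg _ _)
  have h4 : A * (∫ x in (-1 : ℝ)..1, (Real.cosh (QQ ε h x) - 1)) ≤ A * (η / (16 * A)) := by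
    refine mul_le_mul_of_nonneg_left ?_ hAp.le
    linarith
  have h5 : A * (η / (16 * A)) = η / 16 := by field_simp
  have := neg_le_abs (∫ x, f x * QQ ε h x)
  linarith

def phi' (s : ℝ) : ℝ := 2 * s / (1 + s ^ 2) ^ 2

lemma phi_deriv (s : ℝ) : HasDerivAt (fun s : ℝ => s ^ 2 / (1 + s ^ 2)) (phi' s) s := by
  have h1 : HasDerivAt (fun s : ℝ => s ^ 2) (2 * s) s := by simpa using hasDerivAt_pow 2 s
  have h2 := h1.div (h1.const_add 1) (by positivity)
  refine h2.congr_deriv ?_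
  unfold phi'
  congr 1
  ring

lemma phi'_cont : Continuous phi' := by
  unfold phi'
  exact Continuous.div (by fun_prop) (by fun_prop) (fun t => by positivity)

lemma phi'_nonneg {s : ℝ} (hs : 0 ≤ s) : 0 ≤ phi' s := by unfold phi'; positivity

lemma phi_tendsto : Tendsto (fun s : ℝ => s ^ 2 / (1 + s ^ 2)) atTop (nhds 1) := by
  have h : Tendsto (fun s : ℝ => 1 - 1 / (1 + s ^ 2)) atTop (nhds (1 - 0)) := by
    refine tendsto_const_nhds.sub (tendsto_const_nhds.div_atTop ?_)
    exact tendsto_atTop_add_const_left _ _ (tendsto_pow_atTop two_ne_zero)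
  rw [sub_zero] at h
  refine h.congr fun s => ?_
  have : 1 + s ^ 2 ≠ 0 := by positivity
  field_simp
  ring

lemma phi'_int : IntegrableOn phi' (Ioi 0) :=
  integrableOn_Ioi_deriv_of_nonneg' (fun x _ => phi_deriv x) (fun x hx => phi'_nonneg (le_of_lt hx))
    phi_tendsto

lemma phi'_integral : ∫ s in Ioi (0 : ℝ), phi' s = 1 := by
  rw [integral_Ioi_of_hasDerivAt_of_nonneg' (fun x _ => phi_deriv x)
    (fun x hx => phi'_nonneg (le_of_lt hx)) phi_tendsto]
  simp

/-- truncated integral, real version -/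
def LL (f : ℝ → ℝ) (t r : ℝ) : ℝ := ∫ x, if r ≤ |x - t| then f x / (x - t) else 0

lemma abel_kernel {f : ℝ → ℝ} (hf : Integrable f) (t : ℝ) {ε : ℝ} (hε : 0 < ε) :
    Integrable (fun p : ℝ × ℝ => phi' p.1 * (if ε * p.1 ≤ |p.2 - t| then f p.2 / (p.2 - t) else 0))
      ((volume.restrict (Ioi (0 : ℝ))).prod volume) := by
  have ha : Integrable (fun s : ℝ => (1 + s ^ 2)⁻¹) (volume.restrict (Ioi (0 : ℝ))) :=
    integrable_inv_one_add_sq.integrableOn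
  have hB : Measurable (fun p : ℝ × ℝ => if 0 < p.1 ∧ ε * p.1 ≤ |p.2 - t| then
      2 * p.1 / ((1 + p.1 ^ 2) * (p.2 - t)) else 0) := by
    refine Measurable.ite ?_ (by fun_prop) measurable_const
    have hm1 : MeasurableSet {p : ℝ × ℝ | 0 < p.1} := measurableSet_lt measurable_const measurable_fst
    have hm2 : MeasurableSet {p : ℝ × ℝ | ε * p.1 ≤ |p.2 - t|} :=
      measurableSet_le (by fun_prop) (by fun_prop)
    exact hm1.inter hm2
  have := Integrable.mul_bdd (c := 2 / ε) (ha.mul_prod hf) hB.aestronglyMeasurable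
    (Eventually.of_forall fun p => by
      split_ifs with h
      · obtain ⟨h1, h2⟩ := h
        have h3 : 0 < |p.2 - t| := lt_of_lt_of_le (by positivity) h2
        rw [Real.norm_eq_abs, abs_div, abs_mul, abs_mul, abs_of_pos h1,
          abs_of_pos (show 0 < 1 + p.1 ^ 2 by positivity), abs_two,
          div_le_div_iff₀ (by positivity) hε]
        nlinarith [mul_nonneg (sq_nonneg p.1) h3.le]
      · simp; positivity)
  refine this.congr ?_
  have hae : ∀ᵐ p : ℝ × ℝ ∂((volume.restrict (Ioi (0 : ℝ))).prod volume), 0 < p.1 := by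
    have h0 : ∀ᵐ s ∂(volume.restrict (Ioi (0 : ℝ))), 0 < s := ae_restrict_mem measurableSet_Ioi
    exact Measure.quasiMeasurePreserving_fst.ae h0
  filter_upwards [hae] with p hp
  by_cases h : ε * p.1 ≤ |p.2 - t|
  · have hne : p.2 - t ≠ 0 := by
      rw [← abs_pos]; exact lt_of_lt_of_le (by positivity) h
    rw [if_pos ⟨hp, h⟩, if_pos h]
    unfold phi'
    have : 1 + p.1 ^ 2 ≠ 0 := by positivity
    field_simp
  · rw [if_neg (fun h' => h h'.2), if_neg h]; simp

lemma abel_formula {f : ℝ → ℝ} (hf : Integrable f) (t : ℝ) {ε : ℝ} (hε : 0 < ε) :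
    QQ ε f t = ∫ s in Ioi (0 : ℝ), phi' s * LL f t (ε * s) := by
  have hsw := integral_integral_swap (μ := volume.restrict (Ioi (0 : ℝ))) (ν := volume)
    (f := fun s x => phi' s * (if ε * s ≤ |x - t| then f x / (x - t) else 0))
    (abel_kernel hf t hε)
  simp only [integral_const_mul] at hsw
  unfold LL
  rw [hsw]
  unfold QQ
  congr 1
  funext x
  have e1 : ∀ s : ℝ, phi' s * (if ε * s ≤ |x - t| then f x / (x - t) else 0) =
      (Iic (|x - t| / ε)).indicator phi' s * (f x / (x - t)) := by
    intro s
    by_cases h : ε * s ≤ |x - t|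
    · have : s ∈ Iic (|x - t| / ε) := by
        rw [mem_Iic, le_div_iff₀ hε]; linarith
      rw [if_pos h, indicator_of_mem this]
    · have : s ∉ Iic (|x - t| / ε) := by
        rw [mem_Iic, le_div_iff₀ hε]; intro h'; exact h (by linarith)
      rw [if_neg h, indicator_of_notMem this]; simp
  simp only [e1]
  rw [integral_mul_const, integral_indicator measurableSet_Iic, Measure.restrict_restrict measurableSet_Iic]
  have e2 : Iic (|x - t| / ε) ∩ Ioi 0 = Ioc 0 (|x - t| / ε) := by
    ext s; simp [and_comm]
  have h0 : 0 ≤ |x - t| / ε := by positivity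
  rw [e2, ← intervalIntegral.integral_of_le h0,
    intervalIntegral.integral_eq_sub_of_hasDerivAt (fun s _ => phi_deriv s)
      (phi'_cont.intervalIntegrable _ _)]
  unfold kQ
  by_cases hx : x - t = 0
  · simp [hx]
  · rw [div_pow, sq_abs]
    have : (x - t) ^ 2 + ε ^ 2 ≠ 0 := by positivity
    have : 1 + (x - t) ^ 2 / ε ^ 2 ≠ 0 := by positivity
    field_simp
    ring

lemma LL_bound {f : ℝ → ℝ} (hf : Integrable f) (t : ℝ) {r : ℝ} (hr : 0 < r) :
    |LL f t r| ≤ r⁻¹ * ∫ x, |f x| := by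
  unfold LL
  rw [← integral_const_mul, ← Real.norm_eq_abs]
  refine norm_integral_le_of_norm_le (hf.norm.const_mul _) (Eventually.of_forall fun x => ?_)
  split_ifs with h
  · rw [norm_div, div_eq_inv_mul]
    exact mul_le_mul_of_nonneg_right (inv_anti₀ hr h) (norm_nonneg _)
  · rw [norm_zero]; positivity

lemma abel {f : ℝ → ℝ} (hf : Integrable f) {t c : ℝ}
    (h : Tendsto (LL f t) (nhdsWithin 0 (Ioi 0)) (nhds c)) :
    Tendsto (fun ε => QQ ε f t) (nhdsWithin 0 (Ioi 0)) (nhds c) := by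
  obtain ⟨D, hD⟩ : ∃ D, ∀ r > 0, |LL f t r| ≤ D := by
    have h1 : ∀ᶠ r in nhdsWithin (0 : ℝ) (Ioi 0), |LL f t r| < |c| + 1 :=
      h.abs.eventually (gt_mem_nhds (by linarith))
    obtain ⟨r0, hr0, hr⟩ := mem_nhdsGT_iff_exists_Ioo_subset.1 h1
    have hr0' : 0 < r0 := hr0
    refine ⟨|c| + 1 + r0⁻¹ * ∫ x, |f x|, fun r hrp => ?_⟩
    have hnn : 0 ≤ ∫ x, |f x| := integral_nonneg fun x => abs_nonneg _
    by_cases hlt : r < r0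
    · have h2 : |LL f t r| < |c| + 1 := hr ⟨hrp, hlt⟩
      have : 0 ≤ r0⁻¹ * ∫ x, |f x| := by positivity
      linarith
    · push Not at hlt
      have h2 := LL_bound hf t hrp
      have h3 : r⁻¹ * ∫ x, |f x| ≤ r0⁻¹ * ∫ x, |f x| :=
        mul_le_mul_of_nonneg_right (inv_anti₀ hr0' hlt) hnn
      have := abs_nonneg c
      linarith
  have key : Tendsto (fun ε => ∫ s in Ioi (0 : ℝ), phi' s * LL f t (ε * s))
      (nhdsWithin 0 (Ioi 0)) (nhds (∫ s in Ioi (0 : ℝ), phi' s * c)) := by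
    refine tendsto_integral_filter_of_dominated_convergence (fun s => phi' s * D) ?_ ?_
      (phi'_int.mul_const D) ?_
    · filter_upwards [self_mem_nhdsWithin] with ε hε
      have := (abel_kernel hf t hε).integral_prod_left
      simp only [integral_const_mul] at this
      exact this.aestronglyMeasurable
    · filter_upwards [self_mem_nhdsWithin] with ε hε
      filter_upwards [ae_restrict_mem measurableSet_Ioi] with s hs
      have hs' : 0 < s := hs
      rw [norm_mul, Real.norm_of_nonneg (phi'_nonneg hs'.le)]
      exact mul_le_mul_of_nonneg_left (hD _ (mul_pos hε hs')) (phi'_nonneg hs'.le)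
    · filter_upwards [ae_restrict_mem measurableSet_Ioi] with s hs
      have hs' : 0 < s := hs
      refine Tendsto.const_mul _ (h.comp ?_)
      refine tendsto_nhdsWithin_iff.2 ⟨?_, ?_⟩
      · have : Tendsto (fun ε : ℝ => ε * s) (nhds 0) (nhds (0 * s)) := by
          exact (continuous_id.mul continuous_const).tendsto 0
        rw [zero_mul] at this
        exact this.mono_left nhdsWithin_le_nhds
      · filter_upwards [self_mem_nhdsWithin] with ε hε
        exact mul_pos hε hs'
  rw [integral_mul_const, phi'_integral, one_mul] at key
  refine key.congr' ?_
  filter_upwards [self_mem_nhdsWithin] with ε hε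
  exact (abel_formula hf t hε).symm
def psi (x : ℝ) : ℝ := max (1 - |x|) 0

lemma psi_cont : Continuous psi := by unfold psi; fun_prop

lemma psi_nonneg (x : ℝ) : 0 ≤ psi x := le_max_right _ _

lemma psi_le_one (x : ℝ) : psi x ≤ 1 := max_le (by linarith [abs_nonneg x]) (by norm_num)

lemma psi_zero {x : ℝ} (h : 1 ≤ |x|) : psi x = 0 := max_eq_right (by linarith)

lemma psi_abs_sub (a b : ℝ) : |psi a - psi b| ≤ |a - b| := by
  have h : |psi a - psi b| ≤ |(1 - |a|) - (1 - |b|)| := by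
    have := abs_max_sub_max_le_max (1 - |a|) 0 (1 - |b|) 0
    simpa [psi] using this
  refine h.trans ?_
  rw [show (1 - |a|) - (1 - |b|) = |b| - |a| by ring, abs_sub_comm a b]
  exact abs_abs_sub_abs_le _ _

lemma psi_neg (x : ℝ) : psi (-x) = psi x := by unfold psi; rw [abs_neg]

lemma abs_kQ_le_inv {ε : ℝ} (hε : 0 < ε) (u : ℝ) : |kQ ε u| ≤ |u|⁻¹ := by
  rcases eq_or_ne u 0 with rfl | hu
  · simp [kQ]
  have h : 0 < |u| := abs_pos.2 hu
  unfold kQ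
  rw [abs_div, abs_of_pos (show 0 < u ^ 2 + ε ^ 2 by positivity), div_le_iff₀ (by positivity),
    inv_mul_eq_div, le_div_iff₀ h, ← sq_abs u]
  nlinarith [sq_nonneg ε]

lemma QQ_psi_far {ε : ℝ} (hε : 0 < ε) {t : ℝ} (ht : 2 ≤ |t|) : |QQ ε psi t| ≤ 4 / |t| := by
  have h0 : 0 < |t| := by linarith
  have hi : IntegrableOn (fun _ : ℝ => 2 / |t|) (Ioo (-1 : ℝ) 1) := integrableOn_const (by simp)
  have hb : ‖QQ ε psi t‖ ≤ ∫ x, (Ioo (-1 : ℝ) 1).indicator (fun _ => 2 / |t|) x := by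
    refine norm_integral_le_of_norm_le ((integrable_indicator_iff measurableSet_Ioo).2 hi)
      (Eventually.of_forall fun x => ?_)
    by_cases hx : x ∈ Ioo (-1 : ℝ) 1
    · rw [indicator_of_mem hx, norm_mul, Real.norm_eq_abs, Real.norm_eq_abs,
        abs_of_nonneg (psi_nonneg x)]
      have hx1 : |x| < 1 := abs_lt.2 hx
      have h1 : |t| / 2 ≤ |x - t| := by
        have := abs_sub_abs_le_abs_sub t x
        rw [abs_sub_comm] at this
        linarith
      have h2 : |kQ ε (x - t)| ≤ 2 / |t| := by
        refine (abs_kQ_le_inv hε _).trans ?_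
        rw [show 2 / |t| = (|t| / 2)⁻¹ by rw [inv_div]]
        exact inv_anti₀ (by positivity) h1
      calc psi x * |kQ ε (x - t)| ≤ 1 * |kQ ε (x - t)| :=
            mul_le_mul_of_nonneg_right (psi_le_one x) (abs_nonneg _)
        _ ≤ _ := by rw [one_mul]; exact h2
    · rw [indicator_of_notMem hx, psi_zero, zero_mul, norm_zero]
      by_contra h
      exact hx (abs_lt.1 (not_le.1 h))
  rw [integral_indicator measurableSet_Ioo] at hb
  simp only [integral_const, MeasurableSet.univ, measureReal_restrict_apply, univ_inter,
    Real.volume_real_Ioo, smul_eq_mul] at hb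
  rw [Real.norm_eq_abs] at hb
  refine hb.trans (le_of_eq ?_)
  norm_num
  ring

lemma psi_integrable : Integrable psi := by
  refine psi_cont.integrable_of_hasCompactSupport ?_
  refine HasCompactSupport.of_support_subset_isCompact (isCompact_Icc (a := -1) (b := 1)) ?_
  intro x hx
  rw [mem_Icc, ← abs_le]
  by_contra h
  exact hx (psi_zero (not_le.1 h).le)

lemma QQ_psi_near {ε : ℝ} (hε : 0 < ε) {t : ℝ} (ht : |t| < 2) : |QQ ε psi t| ≤ 7 * √|t| := by
  have e1 : QQ ε psi t = ∫ u, psi (t + u) * kQ ε u := by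
    unfold QQ
    rw [← integral_add_left_eq_self _ t]
    simp
  have e2 : QQ ε psi t = ∫ u, - (psi (t - u) * kQ ε u) := by
    rw [e1, ← integral_neg_eq_self]
    congr 1; funext u
    rw [kQ_neg]; ring_nf
  have i0 := integrable_mul_k psi_integrable (measurable_kQ ε) (abs_kQ_le hε) t
  have i1 : Integrable (fun u => psi (t + u) * kQ ε u) := by
    have := i0.comp_add_left t
    simpa using this
  have i2 : Integrable (fun u => - (psi (t - u) * kQ ε u)) := by
    refine i1.comp_neg.congr (Eventually.of_forall fun u => ?_)
    simp only [kQ_neg]; ring_nf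
  set φ : ℝ → ℝ := fun u => (psi (t + u) - psi (t - u)) * kQ ε u with hφ
  have e3 : 2 * QQ ε psi t = ∫ u, φ u := by
    rw [two_mul]
    nth_rewrite 1 [e1]
    rw [e2, ← integral_add i1 i2]
    congr 1; funext u; rw [hφ]; ring
  have e4 : ∀ u, φ |u| = φ u := by
    intro u
    rcases abs_cases u with ⟨h, _⟩ | ⟨h, _⟩
    · rw [h]
    · rw [h, hφ]; simp only [kQ_neg]; ring_nf
  have e5 : QQ ε psi t = ∫ u in Ioi (0 : ℝ), φ u := by
    have := integral_comp_abs (f := φ)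
    simp only [e4] at this
    linarith
  have hint : IntegrableOn (fun u : ℝ => 2 * √|t| * u ^ (-(1 / 2) : ℝ)) (Ioc 0 3) := by
    have := (intervalIntegral.intervalIntegrable_rpow' (a := 0) (b := 3) (r := -(1 / 2)) (by norm_num))
    rw [intervalIntegrable_iff_integrableOn_Ioc_of_le (by norm_num)] at this
    exact this.const_mul _
  have hb : ‖∫ u in Ioi (0 : ℝ), φ u‖ ≤
      ∫ u in Ioi (0 : ℝ), (Ioc (0 : ℝ) 3).indicator (fun u => 2 * √|t| * u ^ (-(1 / 2) : ℝ)) u := by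
    refine norm_integral_le_of_norm_le
      ((integrable_indicator_iff measurableSet_Ioc).2 hint).integrableOn ?_
    filter_upwards [ae_restrict_mem measurableSet_Ioi] with u hu
    have hu0 : (0 : ℝ) < u := hu
    by_cases h3 : u ≤ 3
    · rw [indicator_of_mem (show u ∈ Ioc (0 : ℝ) 3 from ⟨hu0, h3⟩), norm_mul, Real.norm_eq_abs,
        Real.norm_eq_abs]
      have hk := abs_kQ_le_inv hε u
      rw [abs_of_pos hu0] at hk
      have d1 : |psi (t + u) - psi (t - u)| ≤ 2 * u := by
        refine (psi_abs_sub _ _).trans (le_of_eq ?_)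
        rw [show t + u - (t - u) = 2 * u by ring, abs_of_pos (by positivity)]
      have d2 : |psi (t + u) - psi (t - u)| ≤ 2 * |t| := by
        rw [← psi_neg (t - u)]
        refine (psi_abs_sub _ _).trans (le_of_eq ?_)
        rw [show t + u - -(t - u) = 2 * t by ring, abs_mul, abs_two]
      have d3 : |psi (t + u) - psi (t - u)| ≤ 2 * (√|t| * √u) := by
        rw [← Real.sqrt_mul (abs_nonneg t)]
        have : |psi (t + u) - psi (t - u)| / 2 ≤ √(|t| * u) := by
          refine Real.le_sqrt_of_sq_le ?_
          have := mul_le_mul d2 d1 (abs_nonneg _) (by positivity)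
          nlinarith
        linarith
      calc |psi (t + u) - psi (t - u)| * |kQ ε u| ≤ 2 * (√|t| * √u) * u⁻¹ :=
            mul_le_mul d3 hk (abs_nonneg _) (by positivity)
        _ = 2 * √|t| * u ^ (-(1 / 2) : ℝ) := by
            have : √u * u⁻¹ = u ^ (-(1 / 2) : ℝ) := by
              rw [Real.sqrt_eq_rpow, ← Real.rpow_neg_one u, ← Real.rpow_add hu0]
              norm_num
            rw [← this]; ring
    · rw [indicator_of_notMem (fun h => h3 h.2)]
      push Not at h3
      obtain ⟨a, b⟩ := abs_lt.1 ht
      rw [hφ]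
      simp only
      rw [psi_zero (by rw [abs_of_pos (by linarith)]; linarith),
        psi_zero (by rw [abs_of_neg (by linarith)]; linarith)]
      simp
  rw [setIntegral_indicator measurableSet_Ioc,
    inter_eq_self_of_subset_right (show Ioc (0 : ℝ) 3 ⊆ Ioi 0 from fun x h => h.1),
    ← intervalIntegral.integral_of_le (by norm_num), intervalIntegral.integral_const_mul,
    integral_rpow (Or.inl (by norm_num)), ← e5, Real.norm_eq_abs] at hb
  refine hb.trans ?_
  have h3 : (3 : ℝ) ^ (-(1 / 2) + 1 : ℝ) ≤ 7 / 4 := by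
    rw [show (-(1 / 2) + 1 : ℝ) = 1 / 2 by norm_num, ← Real.sqrt_eq_rpow]
    rw [Real.sqrt_le_left (by norm_num)]; norm_num
  rw [Real.zero_rpow (by norm_num)]
  have := Real.sqrt_nonneg |t|
  have h4 : ((3 : ℝ) ^ (-(1 / 2) + 1 : ℝ) - 0) / (-(1 / 2) + 1) ≤ 7 / 2 := by
    rw [show (-(1 / 2) + 1 : ℝ) = 1 / 2 by norm_num] at *
    linarith
  nlinarith

def HN : ℕ → ℝ → ℝ
  | 0 => fun _ => 0
  | N + 1 => fun x => psi x + HN N (2 * x)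

lemma HN_cont (N : ℕ) : Continuous (HN N) := by
  induction N with
  | zero => exact continuous_const
  | succ N ih => exact psi_cont.add (ih.comp (by fun_prop))

lemma HN_nonneg (N : ℕ) (x : ℝ) : 0 ≤ HN N x := by
  induction N generalizing x with
  | zero => exact le_rfl
  | succ N ih => exact add_nonneg (psi_nonneg x) (ih _)

lemma HN_le (N : ℕ) (x : ℝ) : HN N x ≤ N := by
  induction N generalizing x with
  | zero => simp [HN]
  | succ N ih =>
    have := ih (2 * x)
    have := psi_le_one x
    simp only [HN]; push_cast; linarith

lemma HN_zero (N : ℕ) {x : ℝ} (hx : 1 ≤ |x|) : HN N x = 0 := by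
  induction N generalizing x with
  | zero => rfl
  | succ N ih =>
    simp only [HN]
    rw [psi_zero hx, ih (by rw [abs_mul, abs_two]; linarith), add_zero]

lemma HN_lower (N : ℕ) {x : ℝ} (hx : |x| ≤ (1 / 2) ^ N) : (N : ℝ) / 2 ≤ HN N x := by
  induction N generalizing x with
  | zero => simp [HN]
  | succ N ih =>
    have h1 := ih (x := 2 * x) (by rw [abs_mul, abs_two]; rw [pow_succ] at hx; linarith)
    have h2 : |x| ≤ 1 / 2 := by
      refine hx.trans ?_
      rw [pow_succ]
      have : (1 / 2 : ℝ) ^ N ≤ 1 := pow_le_one₀ (by norm_num) (by norm_num)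
      linarith
    have h3 : 1 / 2 ≤ psi x := le_max_of_le_left (by linarith)
    simp only [HN]; push_cast; linarith

lemma HN_integrable (N : ℕ) : Integrable (HN N) := by
  refine (HN_cont N).integrable_of_hasCompactSupport ?_
  refine HasCompactSupport.of_support_subset_isCompact (isCompact_Icc (a := -1) (b := 1)) ?_
  intro x hx
  rw [mem_Icc, ← abs_le]
  by_contra h
  exact hx (HN_zero N (not_le.1 h).le)

lemma QQ_scale (ε : ℝ) (h : ℝ → ℝ) (t : ℝ) :
    QQ ε (fun x => h (2 * x)) t = QQ (2 * ε) h (2 * t) := by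
  unfold QQ
  have := Measure.integral_comp_mul_left (fun y => h y * kQ ε (y / 2 - t)) 2
  simp only [mul_div_cancel_left₀ _ (two_ne_zero' ℝ)] at this
  rw [this, ← integral_smul]
  congr 1; funext y
  simp only [smul_eq_mul, kQ]
  rw [show (y / 2 - t) = (y - 2 * t) / 2 by ring,
    show ((y - 2 * t) / 2) ^ 2 + ε ^ 2 = ((y - 2 * t) ^ 2 + (2 * ε) ^ 2) / 4 by ring,
    abs_of_pos (by norm_num)]
  rw [div_div_eq_mul_div]
  ring

lemma QQ_HN (N : ℕ) : ∀ ε : ℝ, 0 < ε → ∀ t : ℝ, (2 ≤ |t| → |QQ ε (HN N) t| ≤ 8 / |t|) ∧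
    (|t| < 2 → |QQ ε (HN N) t| ≤ 50 - 20 * √|t|) := by
  have s2 : (1.41 : ℝ) ≤ √2 := Real.le_sqrt_of_sq_le (by norm_num)
  have s2' : √2 ≤ 1.42 := by rw [Real.sqrt_le_left (by norm_num)]; norm_num
  induction N with
  | zero =>
    intro ε hε t
    have : QQ ε (HN 0) t = 0 := by simp [QQ, HN]
    rw [this, abs_zero]
    refine ⟨fun _ => by positivity, fun h => ?_⟩
    have := Real.sqrt_le_sqrt h.le
    linarith
  | succ N ih =>
    intro ε hε t
    have e : QQ ε (HN (N + 1)) t = QQ ε psi t + QQ (2 * ε) (HN N) (2 * t) := by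
      rw [← QQ_scale]
      unfold QQ
      rw [← integral_add (integrable_mul_k psi_integrable (measurable_kQ ε) (abs_kQ_le hε) t)
        (integrable_mul_k ((HN_integrable N).comp_mul_left' two_ne_zero) (measurable_kQ ε)
          (abs_kQ_le hε) t)]
      congr 1; funext x; simp only [HN]; ring
    have htri : |QQ ε (HN (N + 1)) t| ≤ |QQ ε psi t| + |QQ (2 * ε) (HN N) (2 * t)| := by
      rw [e]; exact abs_add_le _ _
    obtain ⟨ihf, ihn⟩ := ih (2 * ε) (by positivity) (2 * t)
    rw [abs_mul, abs_two] at ihf ihn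
    constructor
    · intro h
      have h1 := QQ_psi_far hε h
      have h2 := ihf (by linarith)
      have h3 : 8 / (2 * |t|) = 4 / |t| := by field_simp; norm_num
      have h4 : 8 / |t| = 4 / |t| + 4 / |t| := by ring
      linarith
    · intro h
      have h1 := QQ_psi_near hε h
      by_cases h' : 1 ≤ |t|
      · have h2 := ihf (by linarith)
        have h3 : 8 / (2 * |t|) ≤ 4 := by rw [div_le_iff₀ (by linarith)]; linarith
        have := Real.sqrt_le_sqrt h.le
        linarith
      · have h2 := ihn (by linarith)
        rw [Real.sqrt_mul (by norm_num)] at h2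
        have := Real.sqrt_nonneg |t|
        nlinarith

lemma QQ_HN_bd (N : ℕ) {ε : ℝ} (hε : 0 < ε) (t : ℝ) : |QQ ε (HN N) t| ≤ 50 := by
  obtain ⟨h1, h2⟩ := QQ_HN N ε hε t
  by_cases h : 2 ≤ |t|
  · refine (h1 h).trans ?_
    rw [div_le_iff₀ (by linarith)]; linarith
  · have := h2 (not_le.1 h)
    have := Real.sqrt_nonneg |t|
    linarith

lemma core {f g : ℝ → ℝ} (F : GoodF f) (hg : IntegrableOn g (Ioo (-1 : ℝ) 1))
    (hlim : ∀ᵐ t ∂(volume.restrict (Ioo (-1 : ℝ) 1)),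
      Tendsto (LL f t) (nhdsWithin 0 (Ioi 0)) (nhds (g t))) (N : ℕ) :
    ∫ t in Ioo (-1 : ℝ) 1, HN N t * g t ≤ 50 * ∫ x, |f x| := by
  set e : ℕ → ℝ := fun n => 1 / ((n : ℝ) + 1) with he
  have hep : ∀ n, 0 < e n := fun n => by rw [he]; positivity
  have het : Tendsto e atTop (nhdsWithin 0 (Ioi 0)) :=
    tendsto_nhdsWithin_iff.2 ⟨tendsto_one_div_add_atTop_nhds_zero_nat,
      Eventually.of_forall fun n => hep n⟩
  have hUI : UnifIntegrable (fun n t => QQ (e n) f t) 1 (volume.restrict (Ioo (-1 : ℝ) 1)) := by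
    intro η hη
    obtain ⟨δ, hδ, hE⟩ := QQ_unif F hη
    refine ⟨δ, hδ, fun n s hs hμ => ?_⟩
    have hsI : MeasurableSet (s ∩ Ioo (-1 : ℝ) 1) := hs.inter measurableSet_Ioo
    rw [Measure.restrict_apply hs] at hμ
    have hv : volume.real (s ∩ Ioo (-1 : ℝ) 1) ≤ δ := by
      rw [Measure.real]
      exact ENNReal.toReal_le_of_le_ofReal hδ.le hμ
    have := hE (e n) (hep n) _ hsI inter_subset_right hv
    rw [eLpNorm_indicator_eq_eLpNorm_restrict hs, Measure.restrict_restrict hs,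
      eLpNorm_one_eq_lintegral_enorm]
    have hint : IntegrableOn (QQ (e n) f) (s ∩ Ioo (-1 : ℝ) 1) :=
      ((QQ_f_cont F.int (hep n)).integrableOn_Icc (a := -1) (b := 1)).mono_set
        (fun x hx => Ioo_subset_Icc_self hx.2)
    rw [← ofReal_integral_norm_eq_lintegral_enorm hint]
    exact ENNReal.ofReal_le_ofReal this
  have hV := tendsto_Lp_finite_of_tendsto_ae le_rfl ENNReal.one_ne_top
    (fun n => (QQ_f_cont F.int (hep n)).aestronglyMeasurable) (memLp_one_iff_integrable.2 hg) hUI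
    (by
      filter_upwards [hlim] with t ht
      exact (abel F.int ht).comp het)
  simp only [eLpNorm_one_eq_lintegral_enorm] at hV
  have hT : Tendsto (fun n => ∫ t in Ioo (-1 : ℝ) 1, HN N t * QQ (e n) f t) atTop
      (nhds (∫ t in Ioo (-1 : ℝ) 1, HN N t * g t)) := by
    refine tendsto_integral_of_L1 _ ?_ ?_ ?_
    · exact (HN_cont N).aestronglyMeasurable.mul hg.aestronglyMeasurable
    · refine Eventually.of_forall fun n => ?_
      have : Continuous fun t => HN N t * QQ (e n) f t := (HN_cont N).mul (QQ_f_cont F.int (hep n))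
      exact (this.integrableOn_Icc (a := -1) (b := 1)).mono_set Ioo_subset_Icc_self
    · have hc : Tendsto (fun n => ENNReal.ofReal N *
          ∫⁻ t in Ioo (-1 : ℝ) 1, ‖((fun t => QQ (e n) f t) - g) t‖ₑ) atTop (nhds 0) := by
        have := ENNReal.Tendsto.const_mul hV (Or.inr (ENNReal.ofReal_ne_top (r := N)))
        simpa using this
      refine tendsto_of_tendsto_of_tendsto_of_le_of_le tendsto_const_nhds hc
        (fun _ => bot_le) (fun n => ?_)
      simp only
      rw [← lintegral_const_mul' _ _ ENNReal.ofReal_ne_top]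
      refine lintegral_mono fun t => ?_
      simp only [Pi.sub_apply]
      rw [← mul_sub, enorm_mul]
      gcongr
      rw [Real.enorm_eq_ofReal (HN_nonneg N t)]
      exact ENNReal.ofReal_le_ofReal (HN_le N t)
  refine le_of_tendsto hT (Eventually.of_forall fun n => ?_)
  have h1 : ∫ t in Ioo (-1 : ℝ) 1, HN N t * QQ (e n) f t = ∫ t, HN N t * QQ (e n) f t := by
    refine setIntegral_eq_integral_of_forall_compl_eq_zero fun x hx => ?_
    rw [HN_zero N, zero_mul]
    by_contra h
    exact hx (abs_lt.1 (not_le.1 h))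
  rw [h1, QQ_antisymm F.int (HN_integrable N) (hep n)]
  refine (neg_le_abs _).trans ?_
  rw [← integral_const_mul, ← Real.norm_eq_abs]
  refine norm_integral_le_of_norm_le (F.int.abs.const_mul 50) (Eventually.of_forall fun x => ?_)
  rw [norm_mul, Real.norm_eq_abs, Real.norm_eq_abs, mul_comm]
  exact mul_le_mul_of_nonneg_right (QQ_HN_bd N (hep n) x) (abs_nonneg _)

def gr (x : ℝ) : ℝ := if 0 < x then 1 / (2 * x * √(1 - Real.log x) ^ 3) else 0

def G0 (x : ℝ) : ℝ := if 0 < x then (√(1 - Real.log x))⁻¹ else 0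

lemma gr_nonneg (x : ℝ) : 0 ≤ gr x := by
  unfold gr; split_ifs with h
  · positivity
  · exact le_rfl

lemma one_sub_log_pos {x : ℝ} (h0 : 0 < x) (h1 : x ≤ 1) : 0 < 1 - Real.log x := by
  have := Real.log_nonpos h0.le h1
  linarith

lemma G0_deriv {x : ℝ} (h0 : 0 < x) (h1 : x ≤ 1) : HasDerivAt G0 (gr x) x := by
  have hw := one_sub_log_pos h0 h1
  have hs : √(1 - Real.log x) ≠ 0 := (Real.sqrt_pos.2 hw).ne'
  have h := ((((Real.hasDerivAt_log h0.ne').const_sub 1).sqrt hw.ne').inv hs)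
  have h2 : HasDerivAt G0 _ x := h.congr_of_eventuallyEq (by
    filter_upwards [lt_mem_nhds h0] with y hy
    simp [G0, hy])
  refine h2.congr_deriv ?_
  unfold gr
  rw [if_pos h0]
  field_simp

lemma G0_cont : ContinuousOn G0 (Icc 0 1) := by
  intro x hx
  rcases hx.1.eq_or_lt with rfl | h0
  · have h : ContinuousWithinAt G0 (Ioi 0) 0 := by
      have e0 : G0 0 = 0 := by simp [G0]
      rw [ContinuousWithinAt, e0]
      have : Tendsto (fun x : ℝ => (√(1 - Real.log x))⁻¹) (nhdsWithin 0 (Ioi 0)) (nhds 0) := by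
        refine tendsto_inv_atTop_zero.comp (Real.tendsto_sqrt_atTop.comp ?_)
        have := tendsto_atTop_add_const_left _ (1 : ℝ)
          (tendsto_neg_atBot_atTop.comp Real.tendsto_log_nhdsGT_zero)
        refine this.congr fun x => ?_
        simp [sub_eq_add_neg]
      refine this.congr' ?_
      filter_upwards [self_mem_nhdsWithin] with y hy
      have : (0 : ℝ) < y := hy
      simp [G0, this]
    refine (continuousWithinAt_insert_self.2 h).mono fun y hy => ?_
    rcases hy.1.eq_or_lt with rfl | h
    · exact mem_insert _ _
    · exact mem_insert_of_mem _ h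
  · exact (G0_deriv h0 hx.2).continuousAt.continuousWithinAt

lemma gr_int : IntegrableOn gr (Ioc 0 1) :=
  intervalIntegral.integrableOn_deriv_of_nonneg G0_cont (fun x hx => G0_deriv hx.1 hx.2.le)
    (fun x _ => gr_nonneg x)

lemma gr_int' : IntegrableOn gr (Ioo (-1) 1) := by
  have h2 : IntegrableOn gr (Ioc (-1) 0) := by
    refine (integrableOn_zero (s := Ioc (-1 : ℝ) 0) (μ := volume)).congr_fun (fun x hx => ?_)
      measurableSet_Ioc
    simp [gr, not_lt.2 hx.2]
  refine (h2.union gr_int).mono_set fun x hx => ?_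
  rcases le_or_gt x 0 with h | h
  · exact Or.inl ⟨hx.1, h⟩
  · exact Or.inr ⟨h, hx.2.le⟩

lemma gr_integral (N : ℕ) : ∫ x in Ioc (0 : ℝ) ((1 / 2) ^ N), gr x = (√(1 + N * Real.log 2))⁻¹ := by
  have hp : (0 : ℝ) < (1 / 2) ^ N := by positivity
  have hp1 : (1 / 2 : ℝ) ^ N ≤ 1 := pow_le_one₀ (by norm_num) (by norm_num)
  rw [← intervalIntegral.integral_of_le hp.le,
    intervalIntegral.integral_eq_sub_of_hasDerivAt_of_le hp.le
      (G0_cont.mono (Icc_subset_Icc_right hp1)) (fun x hx => G0_deriv hx.1 (hx.2.le.trans hp1))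
      ((intervalIntegrable_iff_integrableOn_Ioc_of_le hp.le).2
        (gr_int.mono_set (Ioc_subset_Ioc_right hp1)))]
  unfold G0
  rw [if_pos hp, if_neg (lt_irrefl _), sub_zero, Real.log_pow, one_div, Real.log_inv]
  congr 2
  ring

lemma HN_gr_lower {C : ℝ} (hC : 0 ≤ C) {N : ℕ} (hN : 1 ≤ N) :
    (N : ℝ) / 2 * (√(1 + N * Real.log 2))⁻¹ ≤ ∫ t in Ioo (-1 : ℝ) 1, HN N t * (Real.pi * (gr t + C)) := by
  have hp : (0 : ℝ) < (1 / 2) ^ N := by positivity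
  have hp1 : (1 / 2 : ℝ) ^ N ≤ 1 / 2 := by
    simpa using pow_le_pow_of_le_one (show (0 : ℝ) ≤ 1 / 2 by norm_num) (by norm_num) hN
  have hsub : Ioc (0 : ℝ) ((1 / 2) ^ N) ⊆ Ioo (-1) 1 := fun x hx =>
    ⟨by linarith [hx.1], by linarith [hx.2]⟩
  have hi : IntegrableOn (fun t => HN N t * (Real.pi * (gr t + C))) (Ioo (-1) 1) := by
    have h1 : IntegrableOn (fun t => Real.pi * (gr t + C)) (Ioo (-1) 1) :=
      (gr_int'.add (integrableOn_const (by simp))).const_mul _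
    refine Integrable.bdd_mul (c := N) h1 (HN_cont N).aestronglyMeasurable
      (Eventually.of_forall fun x => ?_)
    rw [Real.norm_eq_abs, abs_of_nonneg (HN_nonneg N x)]
    exact HN_le N x
  have hnn : ∀ t, 0 ≤ HN N t * (Real.pi * (gr t + C)) := fun t =>
    mul_nonneg (HN_nonneg N t) (mul_nonneg Real.pi_pos.le (add_nonneg (gr_nonneg t) hC))
  rw [← gr_integral, ← integral_const_mul]
  refine le_trans ?_ (setIntegral_mono_set hi (Eventually.of_forall hnn) hsub.eventuallyLE)
  refine setIntegral_mono_on ((gr_int'.mono_set hsub).const_mul _) (hi.mono_set hsub)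
    measurableSet_Ioc fun x hx => ?_
  have h1 := HN_lower N (x := x) (by rw [abs_of_pos hx.1]; exact hx.2)
  refine mul_le_mul h1 ?_ (gr_nonneg x) (HN_nonneg N x)
  have := Real.pi_gt_three
  nlinarith [gr_nonneg x]

lemma unbounded_aux (K : ℝ) : ∃ N : ℕ, 1 ≤ N ∧ K < (N : ℝ) / 2 * (√(1 + N * Real.log 2))⁻¹ := by
  obtain ⟨k, hk⟩ := exists_nat_gt (2 * |K|)
  have hk0 : (0 : ℝ) < k := lt_of_le_of_lt (by positivity) hk
  have hk1 : 1 ≤ k := by exact_mod_cast hk0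
  have hk1' : (1 : ℝ) ≤ k := by exact_mod_cast hk1
  refine ⟨2 * k ^ 2, by nlinarith, ?_⟩
  push_cast
  have h1 : √(1 + 2 * (k : ℝ) ^ 2 * Real.log 2) ≤ 2 * k := by
    rw [Real.sqrt_le_left (by positivity)]
    have := Real.log_two_lt_d9
    nlinarith
  have h0 : 0 < √(1 + 2 * (k : ℝ) ^ 2 * Real.log 2) := by
    have := Real.log_pos (x := 2) (by norm_num)
    positivity
  have h2 := inv_anti₀ h0 h1
  calc K ≤ |K| := le_abs_self K
    _ < k / 2 := by linarith
    _ = 2 * (k : ℝ) ^ 2 / 2 * (2 * (k : ℝ))⁻¹ := by field_simp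
    _ ≤ _ := mul_le_mul_of_nonneg_left h2 (by positivity)

lemma MemLlogL.int {f : ℝ → ℂ} (hf : MemLlogL f) : IntegrableOn f (Ioo (-1 : ℝ) 1) := by
  have h3 : IntegrableOn (fun _ : ℝ => (3 : ℝ)) (Ioo (-1 : ℝ) 1) := integrableOn_const (by simp)
  refine (h3.add hf.2).mono' hf.1 (Eventually.of_forall fun x => ?_)
  simp only [Pi.add_apply]
  by_cases h : ‖f x‖ ≤ 3
  · have : 0 ≤ ‖f x‖ * max (Real.log ‖f x‖) 0 := mul_nonneg (norm_nonneg _) (le_max_right _ _)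
    linarith
  · push Not at h
    have hl : 1 ≤ Real.log ‖f x‖ := by
      rw [Real.le_log_iff_exp_le (by linarith)]
      linarith [Real.exp_one_lt_d9]
    have := le_max_left (Real.log ‖f x‖) 0
    nlinarith [norm_nonneg (f x)]

lemma mul_log_mono {a b : ℝ} (ha : 0 ≤ a) (h : a ≤ b) :
    a * max (Real.log a) 0 ≤ b * max (Real.log b) 0 := by
  rcases ha.eq_or_lt with rfl | ha
  · rw [zero_mul]; exact mul_nonneg h (le_max_right _ _)
  · exact mul_le_mul h (max_le_max (Real.log_le_log ha h) le_rfl) (le_max_right _ _) (by linarith)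

lemma MemLlogL.good {f : ℝ → ℂ} (hf : MemLlogL f) :
    GoodF ((Ioo (-1 : ℝ) 1).indicator fun x => (f x).re) where
  int := (integrable_indicator_iff measurableSet_Ioo).2 hf.int.re
  supp := fun x hx => indicator_of_notMem hx _
  llog := by
    have e : (fun x => |(Ioo (-1 : ℝ) 1).indicator (fun x => (f x).re) x| *
        max (Real.log |(Ioo (-1 : ℝ) 1).indicator (fun x => (f x).re) x|) 0) =
        (Ioo (-1 : ℝ) 1).indicator (fun x => |(f x).re| * max (Real.log |(f x).re|) 0) := by
      funext x
      by_cases hx : x ∈ Ioo (-1 : ℝ) 1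
      · simp only [indicator_of_mem hx]
      · simp only [indicator_of_notMem hx, abs_zero, zero_mul]
    rw [e, integrable_indicator_iff measurableSet_Ioo]
    have hm : AEMeasurable (fun x => (f x).re) (volume.restrict (Ioo (-1 : ℝ) 1)) :=
      hf.int.re.aestronglyMeasurable.aemeasurable
    refine hf.2.mono' ?_ (Eventually.of_forall fun x => ?_)
    · have hφ : Measurable (fun y : ℝ => |y| * max (Real.log |y|) 0) := by fun_prop
      exact (hφ.comp_aemeasurable hm).aestronglyMeasurable
    · rw [Real.norm_eq_abs, abs_of_nonneg (mul_nonneg (abs_nonneg _) (le_max_right _ _))]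
      exact mul_log_mono (abs_nonneg _) (Complex.abs_re_le_norm _)

lemma LL_eq {f : ℝ → ℂ} (hf : IntegrableOn f (Ioo (-1 : ℝ) 1)) (t : ℝ) {ε : ℝ} (hε : 0 < ε) :
    LL ((Ioo (-1 : ℝ) 1).indicator fun x => (f x).re) t ε =
      (∫ x in SS t ε, f x / ((x : ℂ) - (t : ℂ))).re := by
  have h := integral_re (integrableOn_div hf t hε)
  have h' : (∫ x in SS t ε, f x / ((x : ℂ) - (t : ℂ))).re =
      ∫ x in SS t ε, (f x / ((x : ℂ) - (t : ℂ))).re := h.symm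
  rw [h', ← integral_indicator (measurableSet_SS t ε)]
  unfold LL
  congr 1; funext x
  have e : (f x / ((x : ℂ) - (t : ℂ))).re = (f x).re / (x - t) := by
    rw [← Complex.ofReal_sub, Complex.div_ofReal_re]
  by_cases h1 : ε ≤ |x - t|
  · rw [if_pos h1]
    by_cases h2 : x ∈ Ioo (-1 : ℝ) 1
    · rw [indicator_of_mem h2, indicator_of_mem (show x ∈ SS t ε from ⟨h2, h1⟩), e]
    · rw [indicator_of_notMem h2, indicator_of_notMem (fun h : x ∈ SS t ε => h2 h.1), zero_div]
  · rw [if_neg h1, indicator_of_notMem (fun h : x ∈ SS t ε => h1 h.2)]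

def junk : ℂ := Classical.choice (inferInstance : Nonempty ℂ)

lemma LL_tendsto {f : ℝ → ℂ} (hf : IntegrableOn f (Ioo (-1 : ℝ) 1)) {t r : ℝ}
    (h : FHT f t = (r : ℂ)) (hr : (r : ℂ) ≠ junk) :
    Tendsto (LL ((Ioo (-1 : ℝ) 1).indicator fun x => (f x).re) t) (nhdsWithin 0 (Ioi 0))
      (nhds (Real.pi * r)) := by
  have hex : ∃ x, Tendsto (fun ε : ℝ => (Real.pi : ℂ)⁻¹ * ∫ x in SS t ε, f x / ((x : ℂ) - (t : ℂ)))
      (nhdsWithin 0 (Ioi 0)) (nhds x) := by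
    by_contra hne
    have := limUnder_of_not_tendsto (hX := inferInstance) hne
    exact hr (h.symm.trans this)
  have h1 := tendsto_nhds_limUnder hex
  have h2 : Tendsto (fun ε : ℝ => (Real.pi : ℂ)⁻¹ * ∫ x in SS t ε, f x / ((x : ℂ) - (t : ℂ)))
      (nhdsWithin 0 (Ioi 0)) (nhds (r : ℂ)) := by
    rw [← h]; exact h1
  have h3 := (Complex.continuous_re.tendsto _).comp (h2.const_mul (Real.pi : ℂ))
  rw [show ((Real.pi : ℂ) * (r : ℂ)).re = Real.pi * r by simp] at h3
  refine h3.congr' ?_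
  filter_upwards [self_mem_nhdsWithin] with ε hε
  rw [LL_eq hf t hε]
  have hpi : (Real.pi : ℂ) ≠ 0 := by exact_mod_cast Real.pi_ne_zero
  simp only [Function.comp]
  rw [mul_inv_cancel_left₀ hpi]

lemma part_two : ∃ g : ℝ → ℂ, IntegrableOn g (Set.Ioo (-1 : ℝ) 1) ∧
      ¬ ∃ f : ℝ → ℂ, MemLlogL f ∧ FHT f =ᵐ[μI] g := by
  set C : ℝ := ‖junk‖ + 1 with hC
  have hC0 : 0 ≤ C := by positivity
  have hgi : IntegrableOn (fun x => gr x + C) (Ioo (-1 : ℝ) 1) :=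
    gr_int'.add (integrableOn_const (by simp))
  refine ⟨fun x => ((gr x + C : ℝ) : ℂ), hgi.ofReal, ?_⟩
  rintro ⟨f, hf, hfg⟩
  have hne : ∀ x, ((gr x + C : ℝ) : ℂ) ≠ junk := by
    intro x hx
    have h1 : ‖((gr x + C : ℝ) : ℂ)‖ = gr x + C := by
      rw [Complex.norm_real, Real.norm_eq_abs, abs_of_nonneg (add_nonneg (gr_nonneg x) hC0)]
    rw [hx] at h1
    linarith [gr_nonneg x]
  have hlim : ∀ᵐ t ∂(volume.restrict (Ioo (-1 : ℝ) 1)),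
      Tendsto (LL ((Ioo (-1 : ℝ) 1).indicator fun x => (f x).re) t) (nhdsWithin 0 (Ioi 0))
        (nhds (Real.pi * (gr t + C))) := by
    have : ∀ᵐ t ∂(volume.restrict (Ioo (-1 : ℝ) 1)), FHT f t = ((gr t + C : ℝ) : ℂ) := hfg
    filter_upwards [this] with t ht
    exact LL_tendsto hf.int ht (hne t)
  obtain ⟨N, hN, hK⟩ := unbounded_aux
    (50 * ∫ x, |(Ioo (-1 : ℝ) 1).indicator (fun x => (f x).re) x|)
  have h1 := core hf.good (g := fun t => Real.pi * (gr t + C)) (hgi.const_mul _) hlim N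
  have h2 := HN_gr_lower hC0 hN
  linarith

/-- The range `T(L log L)` is a proper dense (linear) subspace of `L¹(-1,1)`: it is dense
in `L¹` and there is `g ∈ L¹` not of the form `T(f)`, `f ∈ L log L`. -/
theorem range_proper_dense :
    (∀ g : ℝ → ℂ, IntegrableOn g (Set.Ioo (-1 : ℝ) 1) → ∀ ε : ℝ, 0 < ε →
      ∃ f : ℝ → ℂ, MemLlogL f ∧
        ∫ x in Set.Ioo (-1 : ℝ) 1, ‖FHT f x - g x‖ < ε) ∧
    (∃ g : ℝ → ℂ, IntegrableOn g (Set.Ioo (-1 : ℝ) 1) ∧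
      ¬ ∃ f : ℝ → ℂ, MemLlogL f ∧ FHT f =ᵐ[μI] g) := by
  exact ⟨part_one, part_two⟩
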